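/- There exists a universal constant C such that the following holds. Let (g_υ)_{υ∈ℝ^I} be a nice distribution of polynomials of degree at most d on ℝ^n, where d ≥ 2. Fix parameters R ≥ 1, 0 < ε ≤ 1, 0 < β < 1, and assume 0 ≤ λ ≤ (ε/R²)·(β/d)^{C·log d}. Then for x ∼ N(0,1)^n, except with probability at most β, the family ((g_υ)_{λ|x})_υ is (R,ε)-attenuated on average; i.e., E_υ[HyperVar_R[(g_υ)_{λ|x}]] ≤ ε·E_υ[‖(g_υ)_{λ|x}‖₂²]. -/

import Mathlib

open MeasureTheory ProbabilityTheory MvPolynomial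

/-- The standard Gaussian measure `N(0,1)^n` on `ℝ^n`. -/
noncomputable def gaussianN (n : ℕ) : Measure (Fin n → ℝ) :=
  Measure.pi fun _ => gaussianReal 0 1

/-- The normalized probabilists' Hermite polynomial `h_k = H_k / √(k!)`. -/
noncomputable def hermiteFn (k : ℕ) (t : ℝ) : ℝ :=
  ((Polynomial.hermite k).map (Int.castRingHom ℝ)).eval t / Real.sqrt (Nat.factorial k)

/-- The multivariate Hermite polynomial `h_α(x) = ∏ i, h_{α i}(x i)`. -/
noncomputable def hermiteMv {n : ℕ} (α : Fin n → ℕ) (x : Fin n → ℝ) : ℝ :=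
  ∏ i, hermiteFn (α i) (x i)

/-- Hermite coefficient `f̂(α) = E_{x ∼ N(0,1)^n}[f(x)·h_α(x)]` of a function. -/
noncomputable def hermiteCoeffF {n : ℕ} (f : (Fin n → ℝ) → ℝ) (α : Fin n → ℕ) : ℝ :=
  ∫ x, f x * hermiteMv α x ∂(gaussianN n)

/-- Hermite coefficient `ĝ(α)` of a polynomial. -/
noncomputable def hermiteCoeff {n : ℕ} (g : MvPolynomial (Fin n) ℝ) (α : Fin n → ℕ) : ℝ :=
  hermiteCoeffF (fun x => eval x g) α

/-- The squared Gaussian 2-norm `‖g‖₂² = E_{x ∼ N(0,1)^n}[g(x)²]`. -/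
noncomputable def norm2sq {n : ℕ} (g : MvPolynomial (Fin n) ℝ) : ℝ :=
  ∫ x, (eval x g) ^ 2 ∂(gaussianN n)

/-- The `λ`-zoom of `g` at `x`: `g_{λ|x}(y) = g(√(1-λ)·x + √λ·y)`, as a polynomial in `y`. -/
noncomputable def zoom {n : ℕ} (g : MvPolynomial (Fin n) ℝ) (lam : ℝ) (x : Fin n → ℝ) :
    MvPolynomial (Fin n) ℝ :=
  aeval (fun i => C (Real.sqrt (1 - lam) * x i) + C (Real.sqrt lam) * X i) g

/-- `HyperVar_R[g^{≥m}] = Σ_{|α| ≥ m} R^{2|α|}·ĝ(α)²`. -/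
noncomputable def hyperVarGE {n : ℕ} (R : ℝ) (m : ℕ) (g : MvPolynomial (Fin n) ℝ) : ℝ :=
  ∑' α : Fin n → ℕ, if m ≤ ∑ i, α i then R ^ (2 * ∑ i, α i) * hermiteCoeff g α ^ 2 else 0

/-- `HyperVar_R[g] = Σ_{α ≠ 0} R^{2|α|}·ĝ(α)²`. -/
noncomputable def hyperVar {n : ℕ} (R : ℝ) (g : MvPolynomial (Fin n) ℝ) : ℝ :=
  hyperVarGE R 1 g

/-- A nice distribution of polynomials of degree at most `d` on `ℝ^n`, indexed by
`υ ∈ ℝ^I`: each `g υ` has degree at most `d` and each coefficient of `g υ` is a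
polynomial of degree at most `d` in `υ`. -/
def NiceFamily (n I d : ℕ) (g : (Fin I → ℝ) → MvPolynomial (Fin n) ℝ) : Prop :=
  (∀ υ, (g υ).totalDegree ≤ d) ∧
  ∀ m : Fin n →₀ ℕ, ∃ P : MvPolynomial (Fin I) ℝ,
    P.totalDegree ≤ d ∧ ∀ υ, coeff m (g υ) = eval υ P

theorem exists_polynomial_circle {n d : ℕ} (f : MvPolynomial (Fin n) ℝ) (hf : f.totalDegree ≤ d)
    (x y : Fin n → ℝ) :
    ∃ G : Polynomial ℂ, G.natDegree ≤ 2 * d ∧ ∀ θ : ℝ,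
      ((eval (fun i => Real.cos θ * x i + Real.sin θ * y i) f : ℝ) : ℂ) *
        Complex.exp (θ * Complex.I) ^ d = G.eval (Complex.exp (θ * Complex.I)) := by
  have hm : ∀ m ∈ f.support, ∑ i, m i ≤ d := fun m hm => by
    have := le_totalDegree hm
    rw [Finsupp.sum_fintype _ _ (by simp)] at this
    exact this.trans hf
  refine ⟨∑ m ∈ f.support, Polynomial.C ((coeff m f : ℝ) : ℂ) * Polynomial.X ^ (d - ∑ i, m i) *
    ∏ i, (Polynomial.C (((x i : ℂ) - y i * Complex.I) / 2) * Polynomial.X ^ 2 +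
      Polynomial.C (((x i : ℂ) + y i * Complex.I) / 2)) ^ m i, ?_, fun θ => ?_⟩
  · refine Polynomial.natDegree_sum_le_of_forall_le _ _ fun m hms => ?_
    have h1 : (∏ i, (Polynomial.C (((x i : ℂ) - y i * Complex.I) / 2) * Polynomial.X ^ 2 +
      Polynomial.C (((x i : ℂ) + y i * Complex.I) / 2)) ^ m i).natDegree ≤ ∑ i, m i * 2 := by
      refine (Polynomial.natDegree_prod_le _ _).trans (Finset.sum_le_sum fun i _ => ?_)
      exact Polynomial.natDegree_pow_le_of_le _ (by compute_degree)
    have h2 := hm m hms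
    rw [← Finset.sum_mul] at h1
    refine Polynomial.natDegree_mul_le.trans ?_
    have h3 : (Polynomial.C ((coeff m f : ℝ) : ℂ) * Polynomial.X ^ (d - ∑ i, m i)).natDegree
        ≤ d - ∑ i, m i := Polynomial.natDegree_C_mul_X_pow_le _ _
    omega
  · rw [eval_eq', Polynomial.eval_finsetSum, Complex.ofReal_sum, Finset.sum_mul]
    refine Finset.sum_congr rfl fun m hms => ?_
    have h2 := hm m hms
    set z := Complex.exp (θ * Complex.I) with hz
    have hzc : z = Complex.cos θ + Complex.sin θ * Complex.I := Complex.exp_mul_I _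
    have hpow : z ^ d = z ^ (d - ∑ i, m i) * ∏ i, z ^ m i := by
      rw [Finset.prod_pow_eq_pow_sum, ← pow_add, Nat.sub_add_cancel h2]
    simp only [Polynomial.eval_mul, Polynomial.eval_C, Polynomial.eval_pow, Polynomial.eval_X,
      Polynomial.eval_prod, Polynomial.eval_add]
    rw [hpow]
    push_cast
    have key : ∀ i, ((x i : ℂ) - y i * Complex.I) / 2 * z ^ 2 + ((x i : ℂ) + y i * Complex.I) / 2
        = (Complex.cos θ * x i + Complex.sin θ * y i) * z := fun i => by
      have h1 := Complex.sin_sq_add_cos_sq (θ : ℂ)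
      have h3 := Complex.I_sq
      rw [hzc]
      linear_combination (-(x i : ℂ) / 2 - y i * Complex.I / 2) * h1 + (x i * Complex.sin θ ^ 2 / 2
        - y i * Complex.I * Complex.sin θ ^ 2 / 2 - y i * Complex.cos θ * Complex.sin θ) * h3
    simp only [key, mul_pow]
    rw [Finset.prod_mul_distrib]
    ring

theorem hasDerivAt_eval_comp {σ : Type*} [Fintype σ] (f : MvPolynomial σ ℝ) (c : ℝ → σ → ℝ)
    (c' : σ → ℝ) (θ : ℝ) (hc : ∀ i, HasDerivAt (fun t => c t i) (c' i) θ) :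
    HasDerivAt (fun t => eval (c t) f) (∑ i, eval (c θ) (pderiv i f) * c' i) θ := by
  classical
  induction f using MvPolynomial.induction_on with
  | C a => simpa using hasDerivAt_const θ a
  | add p q hp hq =>
    simp only [map_add, add_mul, Finset.sum_add_distrib]
    exact hp.add hq
  | mul_X p j hp =>
    have := hp.mul (hc j)
    simp only [map_mul, eval_X]
    refine this.congr_deriv ?_
    simp only [Derivation.leibniz, pderiv_X, smul_eq_mul, map_add, map_mul, eval_X, add_mul,
      Finset.sum_add_distrib, Pi.single_apply]
    rw [Finset.sum_mul, add_comm]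
    congr 1
    · simp [apply_ite]
    · exact Finset.sum_congr rfl fun i _ => by ring

/-- The derivative of `θ ↦ f (cos θ • x + sin θ • y)`. -/
noncomputable def rotDeriv {n : ℕ} (f : MvPolynomial (Fin n) ℝ) (p : (Fin n → ℝ) × (Fin n → ℝ)) :
    ℝ :=
  ∑ i, eval p.1 (pderiv i f) * p.2 i

theorem hasDerivAt_rotation {n : ℕ} (f : MvPolynomial (Fin n) ℝ) (x y : Fin n → ℝ) (θ : ℝ) :
    HasDerivAt (fun θ => eval (ContinuousLinearMap.rotation θ (x, y)).1 f)
      (rotDeriv f (ContinuousLinearMap.rotation θ (x, y))) θ := by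
  refine hasDerivAt_eval_comp f (fun θ => (ContinuousLinearMap.rotation θ (x, y)).1) _ θ
    fun i => ?_
  simp only [ContinuousLinearMap.rotation_apply, Pi.add_apply, Pi.smul_apply, smul_eq_mul]
  exact ((Real.hasDerivAt_cos θ).mul_const _).add ((Real.hasDerivAt_sin θ).mul_const _)

/-- The logarithmic derivative of a trigonometric polynomial is small away from its roots. -/
theorem abs_rotDeriv_le {n d : ℕ} (f : MvPolynomial (Fin n) ℝ) (x y : Fin n → ℝ) (G : Polynomial ℂ)
    (hdeg : G.natDegree ≤ 2 * d)
    (hG : ∀ θ : ℝ, ((eval (ContinuousLinearMap.rotation θ (x, y)).1 f : ℝ) : ℂ) *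
        Complex.exp (θ * Complex.I) ^ d = G.eval (Complex.exp (θ * Complex.I)))
    (hG0 : G ≠ 0) {δ : ℝ} (hδ : 0 < δ) (hδ1 : δ ≤ 1) (θ : ℝ)
    (h : ∀ r ∈ G.roots, δ ≤ ‖Complex.exp (θ * Complex.I) - r‖) :
    |rotDeriv f (ContinuousLinearMap.rotation θ (x, y))| ≤
      3 * d / δ * |eval (ContinuousLinearMap.rotation θ (x, y)).1 f| := by
  set F : ℝ := eval (ContinuousLinearMap.rotation θ (x, y)).1 f with hF
  set F' : ℝ := rotDeriv f (ContinuousLinearMap.rotation θ (x, y)) with hF'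
  set z := Complex.exp (θ * Complex.I) with hz
  have hz0 : z ≠ 0 := Complex.exp_ne_zero _
  have hz1 : ‖z‖ = 1 := Complex.norm_exp_ofReal_mul_I θ
  have hGz : G.eval z ≠ 0 := fun h0 => by
    have := h z ((Polynomial.mem_roots hG0).2 h0)
    simp at this
    linarith
  have hexp : HasDerivAt (fun t : ℝ => Complex.exp (t * Complex.I)) (z * Complex.I) θ := by
    have h1 : HasDerivAt (fun t : ℝ => (t : ℂ) * Complex.I) (1 * Complex.I) θ :=
      (Complex.ofRealCLM.hasDerivAt (x := θ)).mul_const _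
    simpa using h1.cexp
  have hd1 := ((hasDerivAt_rotation f x y θ).ofReal_comp).mul (hexp.pow d)
  have hd2 : HasDerivAt (fun t : ℝ => G.eval (Complex.exp (t * Complex.I)))
      (G.derivative.eval z * (z * Complex.I)) θ := by
    have := HasDerivAt.comp θ (h₂ := fun w => G.eval w) (G.hasDerivAt z) hexp
    exact this
  have heq := hd2.unique (hd1.congr_of_eventuallyEq (Filter.Eventually.of_forall fun t => by
    simpa using (hG t).symm))
  rw [(IsAlgClosed.splits G).eval_derivative_eq_eval_mul_sum hGz, ← hG θ] at heq
  set S := (Multiset.map (fun r => 1 / (z - r)) G.roots).sum with hS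
  have hSn : ‖S‖ ≤ 2 * d / δ := by
    have h1 : ‖S‖ ≤ (G.roots.map fun r => ‖1 / (z - r)‖).sum := by
      rw [hS]
      exact (norm_multiset_sum_le _).trans (by rw [Multiset.map_map]; rfl)
    have h2 : (G.roots.map fun r => ‖1 / (z - r)‖).sum ≤ (G.roots.map fun _ => 1 / δ).sum := by
      refine Multiset.sum_map_le_sum_map _ _ fun r hr => ?_
      rw [norm_div, norm_one]
      exact one_div_le_one_div_of_le hδ (h r hr)
    have h3 : ((G.roots.card : ℕ) : ℝ) ≤ 2 * d := by
      exact_mod_cast (Polynomial.card_roots' G).trans hdeg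
    refine h1.trans (h2.trans ?_)
    simp only [Multiset.map_const', Multiset.sum_replicate, nsmul_eq_mul]
    rw [mul_one_div]
    gcongr
  have hF'eq : (F' : ℂ) = F * (Complex.I * (z * S - d)) := by
    have : (F' : ℂ) * z ^ d = F * (Complex.I * (z * S - d)) * z ^ d := by
      rcases Nat.eq_zero_or_pos d with rfl | hd
      · simp at heq ⊢
        linear_combination -heq
      · have hp : z ^ d = z ^ (d - 1) * z := by
          rw [← pow_succ, Nat.sub_add_cancel hd]
        simp only [← hF, ← hF', ← hz] at heq
        change _ = (F' : ℂ) * z ^ d + F * _ at heq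
        linear_combination (-1 : ℂ) * heq + F * d * Complex.I * hp
    exact mul_right_cancel₀ (pow_ne_zero d hz0) this
  have hn : |F'| = |F| * ‖z * S - d‖ := by
    have := congrArg norm hF'eq
    simpa [Complex.norm_real] using this
  have hb : ‖z * S - d‖ ≤ 3 * d / δ := by
    calc ‖z * S - d‖ ≤ ‖z * S‖ + ‖(d : ℂ)‖ := norm_sub_le _ _
      _ ≤ 2 * d / δ + d / δ := by
        rw [norm_mul, hz1, one_mul, Complex.norm_natCast]
        gcongr
        rw [le_div_iff₀ hδ]
        nlinarith [Nat.cast_nonneg (α := ℝ) d]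
      _ = 3 * d / δ := by ring
  rw [hn, mul_comm]
  gcongr

theorem volume_arc_le (r : ℂ) {δ : ℝ} (hδ : 0 < δ) :
    volume {θ ∈ Set.Icc (0 : ℝ) 1 | ‖Complex.exp (θ * Complex.I) - r‖ < δ} ≤
      ENNReal.ofReal (8 * δ) := by
  by_cases hne : {θ ∈ Set.Icc (0 : ℝ) 1 | ‖Complex.exp (θ * Complex.I) - r‖ < δ}.Nonempty
  · obtain ⟨a, ⟨ha0, ha1⟩, har⟩ := hne
    have hsub : {θ ∈ Set.Icc (0 : ℝ) 1 | ‖Complex.exp (θ * Complex.I) - r‖ < δ} ⊆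
        Set.Icc (a - 4 * δ) (a + 4 * δ) := by
      rintro b ⟨⟨hb0, hb1⟩, hbr⟩
      have h1 : ‖Complex.exp (b * Complex.I) - Complex.exp (a * Complex.I)‖ < 2 * δ := by
        calc _ = ‖(Complex.exp (b * Complex.I) - r) - (Complex.exp (a * Complex.I) - r)‖ := by
              congr 1; ring
          _ ≤ _ := norm_sub_le _ _
          _ < 2 * δ := by linarith
      have h2 : ‖Complex.exp (b * Complex.I) - Complex.exp (a * Complex.I)‖ =
          2 * |Real.sin ((b - a) / 2)| := by
        have : Complex.exp (b * Complex.I) - Complex.exp (a * Complex.I) =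
            Complex.exp (a * Complex.I) * (Complex.exp (Complex.I * ((b - a : ℝ) : ℂ)) - 1) := by
          rw [mul_sub, ← Complex.exp_add, mul_one]
          congr 2
          push_cast; ring
        rw [this, norm_mul, Complex.norm_exp_ofReal_mul_I, one_mul,
          Complex.norm_exp_I_mul_ofReal_sub_one]
        simp
      have hab : |b - a| ≤ 1 := abs_le.2 ⟨by linarith, by linarith⟩
      have h3 : 2 / Real.pi * |(b - a) / 2| ≤ |Real.sin ((b - a) / 2)| := by
        refine Real.mul_abs_le_abs_sin ?_
        rw [abs_div, abs_two]
        linarith [Real.pi_gt_three]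
      have h4 : |b - a| ≤ 4 * δ := by
        rw [abs_div, abs_two] at h3
        have hpi := Real.pi_le_four
        have h5 : |b - a| / Real.pi < δ := by
          have : 2 / Real.pi * (|b - a| / 2) = |b - a| / Real.pi := by ring
          linarith
        rw [div_lt_iff₀ Real.pi_pos] at h5
        nlinarith
      rw [abs_le] at h4
      exact ⟨by linarith, by linarith⟩
    refine (measure_mono hsub).trans ?_
    rw [Real.volume_Icc]
    exact ENNReal.ofReal_le_ofReal (by linarith)
  · rw [Set.not_nonempty_iff_eq_empty] at hne
    rw [hne, measure_empty]
    exact zero_le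

theorem volume_rotDeriv_gt_le {n d : ℕ} (hd : 1 ≤ d) (f : MvPolynomial (Fin n) ℝ)
    (hf : f.totalDegree ≤ d) (x y : Fin n → ℝ) {t : ℝ} (ht : 3 * d ≤ t) :
    volume {θ ∈ Set.Icc (0 : ℝ) 1 | t * |eval (ContinuousLinearMap.rotation θ (x, y)).1 f| <
        |rotDeriv f (ContinuousLinearMap.rotation θ (x, y))|} ≤
      ENNReal.ofReal (48 * d ^ 2 / t) := by
  have hd0 : (0 : ℝ) < d := by exact_mod_cast hd
  have ht0 : 0 < t := by linarith
  obtain ⟨G, hdeg, hG⟩ := exists_polynomial_circle f hf x y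
  have hG' : ∀ θ : ℝ, ((eval (ContinuousLinearMap.rotation θ (x, y)).1 f : ℝ) : ℂ) *
        Complex.exp (θ * Complex.I) ^ d = G.eval (Complex.exp (θ * Complex.I)) := hG
  by_cases hG0 : G = 0
  · have hF : (fun θ => eval (ContinuousLinearMap.rotation θ (x, y)).1 f) = fun _ => 0 := by
      funext θ
      have := hG' θ
      rw [hG0, Polynomial.eval_zero, mul_eq_zero] at this
      exact_mod_cast this.resolve_right (pow_ne_zero d (Complex.exp_ne_zero _))
    have h0 : ∀ θ, rotDeriv f (ContinuousLinearMap.rotation θ (x, y)) = 0 := fun θ => by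
      have := hasDerivAt_rotation f x y θ
      rw [hF] at this
      exact this.unique (hasDerivAt_const θ 0)
    have : {θ ∈ Set.Icc (0 : ℝ) 1 | t * |eval (ContinuousLinearMap.rotation θ (x, y)).1 f| <
        |rotDeriv f (ContinuousLinearMap.rotation θ (x, y))|} = ∅ := by
      ext θ
      simp only [h0, Set.mem_ofPred_eq, abs_zero, Set.mem_empty_iff_false, iff_false, not_and,
        not_lt]
      intro _
      positivity
    rw [this]; simp
  · set δ : ℝ := 3 * d / t with hδ
    have hδ0 : 0 < δ := by positivity
    have hδ1 : δ ≤ 1 := by rw [hδ, div_le_one ht0]; exact ht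
    have hsub : {θ ∈ Set.Icc (0 : ℝ) 1 | t * |eval (ContinuousLinearMap.rotation θ (x, y)).1 f| <
        |rotDeriv f (ContinuousLinearMap.rotation θ (x, y))|} ⊆
        ⋃ r ∈ G.roots.toFinset,
          {θ ∈ Set.Icc (0 : ℝ) 1 | ‖Complex.exp (θ * Complex.I) - r‖ < δ} := by
      rintro θ ⟨hθ, hlt⟩
      by_contra hcon
      simp only [Set.mem_iUnion, not_exists] at hcon
      have := abs_rotDeriv_le f x y G hdeg hG' hG0 hδ0 hδ1 θ fun r hr => by
        by_contra! hr'
        exact hcon r (Multiset.mem_toFinset.2 hr) ⟨hθ, hr'⟩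
      have h3 : 3 * d / δ = t := by rw [hδ]; field_simp
      rw [h3] at this
      linarith
    have hcard : (G.roots.toFinset.card : ℝ) ≤ 2 * d := by
      exact_mod_cast (Multiset.toFinset_card_le _).trans ((Polynomial.card_roots' G).trans hdeg)
    calc _ ≤ _ := measure_mono hsub
      _ ≤ ∑ r ∈ G.roots.toFinset, _ := measure_biUnion_finset_le _ _
      _ ≤ ∑ r ∈ G.roots.toFinset, ENNReal.ofReal (8 * δ) :=
        Finset.sum_le_sum fun r _ => volume_arc_le r hδ0
      _ = ENNReal.ofReal (G.roots.toFinset.card * (8 * δ)) := by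
        rw [Finset.sum_const, nsmul_eq_mul, ENNReal.ofReal_mul (Nat.cast_nonneg _),
          ENNReal.ofReal_natCast]
      _ ≤ ENNReal.ofReal (48 * d ^ 2 / t) := by
        refine ENNReal.ofReal_le_ofReal ?_
        calc (G.roots.toFinset.card : ℝ) * (8 * δ) ≤ 2 * d * (8 * δ) := by gcongr
          _ = _ := by rw [hδ]; ring

/-- The standard Gaussian measure on `ι → ℝ`. -/
noncomputable abbrev stdGaussianPi (ι : Type*) [Fintype ι] : Measure (ι → ℝ) :=
  Measure.pi fun _ => gaussianReal 0 1

theorem integrable_pow_gaussianReal (k : ℕ) :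
    Integrable (fun t : ℝ => t ^ k) (gaussianReal 0 1) := by
  rcases Nat.eq_zero_or_pos k with rfl | hk
  · simp
  · have h := (memLp_id_gaussianReal (μ := 0) (v := 1) (k : NNReal)).integrable_norm_pow hk.ne'
    refine h.mono' (by fun_prop) (Filter.Eventually.of_forall fun t => ?_)
    simp

theorem integrable_polynomial_gaussianReal (q : Polynomial ℝ) :
    Integrable (fun t => q.eval t) (gaussianReal 0 1) := by
  simp only [Polynomial.eval_eq_sum_range]
  exact integrable_finsetSum _ fun k _ => (integrable_pow_gaussianReal k).const_mul _

theorem integrable_polynomial_mul_gaussianPDFReal (q : Polynomial ℝ) :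
    Integrable (fun t => gaussianPDFReal 0 1 t * q.eval t) := by
  have h := integrable_polynomial_gaussianReal q
  rw [gaussianReal_of_var_ne_zero _ one_ne_zero,
    integrable_withDensity_iff_integrable_smul' (measurable_gaussianPDF _ _)
      (Filter.Eventually.of_forall fun _ => gaussianPDF_lt_top)] at h
  simpa only [toReal_gaussianPDF, smul_eq_mul] using h

/-- Gaussian integration by parts for polynomials. -/
theorem integral_mul_polynomial_gaussianReal (q : Polynomial ℝ) :
    ∫ t, t * q.eval t ∂gaussianReal 0 1 = ∫ t, q.derivative.eval t ∂gaussianReal 0 1 := by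
  have hpdf : ∀ t, HasDerivAt (gaussianPDFReal 0 1) (-t * gaussianPDFReal 0 1 t) t := fun t => by
    rw [gaussianPDFReal_def]
    have h1 : HasDerivAt (fun x : ℝ => -(x - 0) ^ 2 / (2 * ((1 : NNReal) : ℝ))) (-t) t := by
      have := ((((hasDerivAt_id t).sub_const 0).pow 2).neg).div_const (2 * ((1 : NNReal) : ℝ))
      refine this.congr_deriv ?_
      simp only [id, NNReal.coe_one, Nat.cast_ofNat]
      ring
    refine (h1.exp.const_mul (√(2 * Real.pi * ((1 : NNReal) : ℝ)))⁻¹).congr_deriv ?_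
    ring
  have hder : ∀ t, HasDerivAt (fun t => gaussianPDFReal 0 1 t * q.eval t)
      (gaussianPDFReal 0 1 t * (q.derivative - Polynomial.X * q).eval t) t := fun t => by
    refine ((hpdf t).mul (q.hasDerivAt t)).congr_deriv ?_
    simp; ring
  have h0 := integral_eq_zero_of_hasDerivAt_of_integrable hder
    (integrable_polynomial_mul_gaussianPDFReal _) (integrable_polynomial_mul_gaussianPDFReal q)
  have h1 := integral_gaussianReal_eq_integral_smul (μ := 0) (v := 1)
    (f := fun t => (q.derivative - Polynomial.X * q).eval t) one_ne_zero
  simp only [smul_eq_mul] at h1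
  rw [h0] at h1
  simp only [Polynomial.eval_sub, Polynomial.eval_mul, Polynomial.eval_X] at h1
  have h2 := integrable_polynomial_gaussianReal (Polynomial.X * q)
  simp only [Polynomial.eval_mul, Polynomial.eval_X] at h2
  rw [integral_sub (integrable_polynomial_gaussianReal _) h2] at h1
  linarith

theorem integral_sq_gaussianReal : ∫ t, t ^ 2 ∂gaussianReal 0 1 = 1 := by
  have := integral_mul_polynomial_gaussianReal Polynomial.X
  simpa [← pow_two] using this

theorem integral_pow_four_gaussianReal : ∫ t, t ^ 4 ∂gaussianReal 0 1 = 3 := by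
  have := integral_mul_polynomial_gaussianReal (Polynomial.X ^ 3)
  simp only [Polynomial.eval_pow, Polynomial.eval_X, Polynomial.derivative_X_pow,
    Polynomial.eval_mul, Polynomial.eval_C, integral_const_mul, Nat.add_one_sub_one,
    integral_sq_gaussianReal, ← pow_succ'] at this
  simpa using this

theorem half_le_integral_abs_gaussianReal : 1 / 2 ≤ ∫ t, |t| ∂gaussianReal 0 1 := by
  have hb : ∀ t : ℝ, 5 / 6 * t ^ 2 - 1 / 10 * t ^ 4 ≤ |t| := fun t => by
    have h1 : t ^ 2 = |t| ^ 2 := (sq_abs t).symm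
    have h2 : t ^ 4 = |t| ^ 4 := by rw [show t ^ 4 = (t ^ 2) ^ 2 by ring, h1]; ring
    rw [h1, h2]
    have h0 := abs_nonneg t
    have h3 : 0 ≤ |t| * ((|t| - 5 / 3) ^ 2 * (|t| + 10 / 3)) := by positivity
    nlinarith
  have h2 := integrable_pow_gaussianReal 2
  have h4 := integrable_pow_gaussianReal 4
  have habs : Integrable (fun t : ℝ => |t|) (gaussianReal 0 1) := by
    simpa using (integrable_pow_gaussianReal 1).abs
  calc (1 / 2 : ℝ) ≤ ∫ t, (5 / 6 * t ^ 2 - 1 / 10 * t ^ 4) ∂gaussianReal 0 1 := by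
        rw [integral_sub (h2.const_mul _) (h4.const_mul _), integral_const_mul, integral_const_mul,
          integral_sq_gaussianReal, integral_pow_four_gaussianReal]
        norm_num
    _ ≤ _ := integral_mono ((h2.const_mul _).sub (h4.const_mul _)) habs hb

instance isGaussian_stdGaussianPi (ι : Type*) [Fintype ι] : IsGaussian (stdGaussianPi ι) := by
  have h1 : iIndepFun (fun i (ω : ι → ℝ) => id (ω i)) (stdGaussianPi ι) :=
    iIndepFun_pi (Ω := fun _ : ι => ℝ) (μ := fun _ : ι => gaussianReal 0 1)
      (𝓧 := fun _ : ι => ℝ) (X := fun _ : ι => (id : ℝ → ℝ)) fun i => aemeasurable_id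
  have h2 : ∀ i, HasGaussianLaw (fun ω : ι → ℝ => id (ω i)) (stdGaussianPi ι) := fun i =>
    ⟨by
      have := (measurePreserving_eval (fun _ : ι => gaussianReal 0 1) i).map_eq
      change IsGaussian (Measure.map (Function.eval (β := fun _ : ι => ℝ) i) _)
      rw [this]
      infer_instance⟩
  have h3 := (h1.hasGaussianLaw h2).isGaussian_map
  simpa using h3

theorem integrable_eval_stdGaussianPi {ι : Type*} [Fintype ι] (f : MvPolynomial ι ℝ) :
    Integrable (fun x => eval x f) (stdGaussianPi ι) := by
  simp only [eval_eq']
  exact integrable_finsetSum _ fun m _ =>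
    (Integrable.fintype_prod fun i => integrable_pow_gaussianReal (m i)).const_mul _

theorem integrable_coord_stdGaussianPi {ι : Type*} [Fintype ι] (i : ι) :
    Integrable (fun x => x i) (stdGaussianPi ι) := by
  simpa using integrable_eval_stdGaussianPi (X i : MvPolynomial ι ℝ)

theorem integral_coord_stdGaussianPi {ι : Type*} [Fintype ι] (i : ι) :
    ∫ x, x i ∂stdGaussianPi ι = 0 := by
  have := (measurePreserving_eval (fun _ : ι => gaussianReal 0 1) i)
  rw [← integral_id_gaussianReal (μ := 0) (v := 1), ← this.map_eq,
    integral_map this.measurable.aemeasurable (by fun_prop)]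

theorem map_rotation_stdGaussianPi {ι : Type*} [Fintype ι] (θ : ℝ) :
    ((stdGaussianPi ι).prod (stdGaussianPi ι)).map (ContinuousLinearMap.rotation θ) =
      (stdGaussianPi ι).prod (stdGaussianPi ι) := by
  refine IsGaussian.map_rotation_eq_self ?_ θ
  ext i
  simp only [id]
  rw [eval_integral fun i => integrable_coord_stdGaussianPi i]
  exact integral_coord_stdGaussianPi i

theorem map_linearForm_stdGaussianPi {ι : Type*} [Fintype ι] (c : ι → ℝ) :
    (stdGaussianPi ι).map (fun y => ∑ i, c i * y i) =
      (gaussianReal 0 1).map (fun t => √(∑ i, c i ^ 2) * t) := by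
  have hlaw : HasGaussianLaw (fun y : ι → ℝ => ∑ i, c i * y i) (stdGaussianPi ι) := by
    refine ⟨?_⟩
    have := isGaussian_map (μ := stdGaussianPi ι)
      (∑ i, c i • (ContinuousLinearMap.proj i : (ι → ℝ) →L[ℝ] ℝ))
    have e : (fun y : ι → ℝ => ∑ i, c i * y i) =
        ⇑(∑ i, c i • (ContinuousLinearMap.proj i : (ι → ℝ) →L[ℝ] ℝ)) := by
      ext y
      simp
    rw [e]
    exact this
  have hmean : ∫ y, ∑ i, c i * y i ∂stdGaussianPi ι = 0 := by
    rw [integral_finsetSum _ fun i _ => (integrable_coord_stdGaussianPi i).const_mul _]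
    exact Finset.sum_eq_zero fun i _ => by
      rw [integral_const_mul, integral_coord_stdGaussianPi, mul_zero]
  have hvar : Var[fun y => ∑ i, c i * y i; stdGaussianPi ι] = ∑ i, c i ^ 2 := by
    have := variance_sum_pi (μ := fun _ : ι => gaussianReal 0 1) (X := fun i t => c i * t)
      fun i => (memLp_id_gaussianReal 2).const_mul _
    have hv : ∀ i, Var[fun t => c i * t; gaussianReal 0 1] = c i ^ 2 := fun i => by
      rw [variance_const_mul (c i) (fun t => t), variance_fun_id_gaussianReal]
      simp
    rw [← Finset.sum_congr rfl fun i _ => hv i, ← this]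
    congr 1
    ext y; simp
  rw [hlaw.map_eq_gaussianReal, hmean, hvar, gaussianReal_map_const_mul]
  congr 1
  · simp
  · ext
    have : 0 ≤ ∑ i, c i ^ 2 := Finset.sum_nonneg fun i _ => sq_nonneg _
    simp [Real.sq_sqrt this, this]

theorem measurable_linearForm {ι : Type*} [Fintype ι] (c : ι → ℝ) :
    Measurable fun y : ι → ℝ => ∑ i, c i * y i :=
  Finset.measurable_fun_sum _ fun i _ => (measurable_pi_apply i).const_mul _

theorem integral_linearForm_sq {ι : Type*} [Fintype ι] (c : ι → ℝ) :
    ∫ y, (∑ i, c i * y i) ^ 2 ∂stdGaussianPi ι = ∑ i, c i ^ 2 := by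
  rw [← integral_map (φ := fun y : ι → ℝ => ∑ i, c i * y i) (f := fun t => t ^ 2)
    (measurable_linearForm c).aemeasurable
    (by fun_prop), map_linearForm_stdGaussianPi, integral_map (by fun_prop) (by fun_prop)]
  simp only [mul_pow, integral_const_mul, integral_sq_gaussianReal, mul_one]
  exact Real.sq_sqrt (Finset.sum_nonneg fun i _ => sq_nonneg _)

theorem half_sqrt_le_integral_abs_linearForm {ι : Type*} [Fintype ι] (c : ι → ℝ) :
    √(∑ i, c i ^ 2) / 2 ≤ ∫ y, |∑ i, c i * y i| ∂stdGaussianPi ι := by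
  rw [← integral_map (φ := fun y : ι → ℝ => ∑ i, c i * y i) (f := fun t => |t|)
    (measurable_linearForm c).aemeasurable
    (by fun_prop), map_linearForm_stdGaussianPi, integral_map (by fun_prop) (by fun_prop)]
  simp only [abs_mul, integral_const_mul, abs_of_nonneg (Real.sqrt_nonneg _)]
  have := mul_le_mul_of_nonneg_left half_le_integral_abs_gaussianReal
    (Real.sqrt_nonneg (∑ i, c i ^ 2))
  linarith

theorem measurable_eval_mvPolynomial {ι : Type*} [Fintype ι] (f : MvPolynomial ι ℝ) :
    Measurable fun x : ι → ℝ => eval x f :=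
  (MvPolynomial.continuous_eval f).measurable

theorem measurable_rotDeriv {n : ℕ} (f : MvPolynomial (Fin n) ℝ) : Measurable (rotDeriv f) := by
  unfold rotDeriv
  exact Finset.measurable_fun_sum _ fun i _ =>
    ((measurable_eval_mvPolynomial _).comp measurable_fst).mul
      ((measurable_pi_apply i).comp measurable_snd)

/-- A polynomial of degree at most `d` is rarely much smaller, at a Gaussian point, than its
derivative in an independent Gaussian direction. -/
theorem measure_rotDeriv_gt_le {n d : ℕ} (hd : 1 ≤ d) (f : MvPolynomial (Fin n) ℝ)
    (hf : f.totalDegree ≤ d) {t : ℝ} (ht : 3 * d ≤ t) :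
    ((stdGaussianPi (Fin n)).prod (stdGaussianPi (Fin n)))
      {z | t * |eval z.1 f| < |rotDeriv f z|} ≤ ENNReal.ofReal (48 * d ^ 2 / t) := by
  set μ := (stdGaussianPi (Fin n)).prod (stdGaussianPi (Fin n)) with hμ
  set B : Set ((Fin n → ℝ) × (Fin n → ℝ)) := {z | t * |eval z.1 f| < |rotDeriv f z|}
  have hB : MeasurableSet B :=
    measurableSet_lt
      (((measurable_eval_mvPolynomial f).comp measurable_fst).abs.const_mul t)
      (measurable_rotDeriv f).abs
  let ν : Measure ℝ := volume.restrict (Set.Icc 0 1)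
  let r : ℝ × ((Fin n → ℝ) × (Fin n → ℝ)) → (Fin n → ℝ) × (Fin n → ℝ) :=
    fun p => ContinuousLinearMap.rotation p.1 p.2
  have hr : Measurable r := by
    have : Continuous r := by
      change Continuous fun p : ℝ × ((Fin n → ℝ) × (Fin n → ℝ)) =>
        ContinuousLinearMap.rotation p.1 p.2
      simp only [ContinuousLinearMap.rotation_apply]
      fun_prop
    exact this.measurable
  have h1 : (ν.prod μ) (r ⁻¹' B) = μ B := by
    rw [Measure.prod_apply (hr hB)]
    have : ∀ θ, μ (Prod.mk θ ⁻¹' (r ⁻¹' B)) = μ B := fun θ => by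
      conv_rhs => rw [hμ, ← map_rotation_stdGaussianPi θ]
      rw [Measure.map_apply (by fun_prop) hB]
      rfl
    simp [this, ν]
  have h2 : (ν.prod μ) (r ⁻¹' B) ≤ ENNReal.ofReal (48 * d ^ 2 / t) := by
    rw [Measure.prod_apply_symm (hr hB)]
    calc ∫⁻ z, ν ((fun θ => (θ, z)) ⁻¹' (r ⁻¹' B)) ∂μ
        ≤ ∫⁻ _, ENNReal.ofReal (48 * d ^ 2 / t) ∂μ := by
          refine lintegral_mono fun z => ?_
          have hm : MeasurableSet ((fun θ => (θ, z)) ⁻¹' (r ⁻¹' B)) :=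
            measurable_prodMk_right (hr hB)
          rw [Measure.restrict_apply hm]
          refine (measure_mono ?_).trans (volume_rotDeriv_gt_le hd f hf z.1 z.2 ht)
          rintro θ ⟨h, hθ⟩
          exact ⟨hθ, h⟩
      _ = _ := by simp
  exact h1.symm.trans_le h2

/-- The version of `measure_rotDeriv_gt_le` for a Gaussian combination of polynomials. -/
theorem measure_combination_gt_le {n d : ℕ} {J : Type*} [Fintype J] (hd : 1 ≤ d)
    (p : J → MvPolynomial (Fin n) ℝ) (hp : ∀ j, (p j).totalDegree ≤ d) {t : ℝ} (ht : 3 * d ≤ t) :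
    ((stdGaussianPi J).prod ((stdGaussianPi (Fin n)).prod (stdGaussianPi (Fin n))))
      {z | t * |∑ j, z.1 j * eval z.2.1 (p j)| <
        |∑ j, z.1 j * ∑ i, eval z.2.1 (pderiv i (p j)) * z.2.2 i|} ≤
      ENNReal.ofReal (48 * d ^ 2 / t) := by
  have hc : ∀ q : MvPolynomial (Fin n) ℝ, Continuous
      fun z : (J → ℝ) × ((Fin n → ℝ) × (Fin n → ℝ)) => eval z.2.1 q := fun q =>
    (MvPolynomial.continuous_eval q).comp (by fun_prop)
  rw [Measure.prod_apply]
  · calc _ ≤ ∫⁻ _, ENNReal.ofReal (48 * d ^ 2 / t) ∂stdGaussianPi J := by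
          refine lintegral_mono fun w => ?_
          have hdeg : (∑ j, C (w j) * p j).totalDegree ≤ d :=
            totalDegree_finsetSum_le fun j _ => (totalDegree_mul _ _).trans (by simpa using hp j)
          refine le_of_eq_of_le ?_ (measure_rotDeriv_gt_le hd _ hdeg ht)
          congr 1
          ext z
          have h1 : eval z.1 (∑ j, C (w j) * p j) = ∑ j, w j * eval z.1 (p j) := by simp
          have h2 : rotDeriv (∑ j, C (w j) * p j) z =
              ∑ j, w j * ∑ i, eval z.1 (pderiv i (p j)) * z.2 i := by
            simp only [rotDeriv, map_sum, pderiv_C_mul, Finset.sum_mul, Finset.mul_sum]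
            rw [Finset.sum_comm]
            simp [mul_assoc]
          simp only [Set.preimage_ofPred_eq, Set.mem_ofPred_eq, h1, h2]
      _ = _ := by simp
  · refine measurableSet_lt (Continuous.measurable ?_) (Continuous.measurable ?_)
    · fun_prop
    · fun_prop

theorem memLp_bilinear_stdGaussianPi {J K : Type*} [Fintype J] [Fintype K] (A : J → K → ℝ) :
    MemLp (fun z : (J → ℝ) × (K → ℝ) => ∑ j, z.1 j * ∑ i, A j i * z.2 i) 2
      ((stdGaussianPi J).prod (stdGaussianPi K)) := by
  refine memLp_finsetSum _ fun j _ => ?_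
  simp only [Finset.mul_sum]
  refine memLp_finsetSum _ fun i _ => ?_
  refine (memLp_two_iff_integrable_sq (by fun_prop)).2 ?_
  have h1 := integrable_eval_stdGaussianPi (X j ^ 2 : MvPolynomial J ℝ)
  have h2 := integrable_eval_stdGaussianPi (X i ^ 2 : MvPolynomial K ℝ)
  simp only [map_pow, eval_X] at h1 h2
  refine ((h1.mul_prod h2).const_mul (A j i ^ 2)).congr
    (Filter.Eventually.of_forall fun z => ?_)
  ring

theorem integral_bilinear_sq {J K : Type*} [Fintype J] [Fintype K] (A : J → K → ℝ) :
    ∫ z, (∑ j, z.1 j * ∑ i, A j i * z.2 i) ^ 2 ∂(stdGaussianPi J).prod (stdGaussianPi K) =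
      ∑ j, ∑ i, A j i ^ 2 := by
  rw [integral_prod_symm _ (memLp_bilinear_stdGaussianPi A).integrable_sq]
  have h : ∀ y : K → ℝ, ∫ w : J → ℝ, (∑ j, w j * ∑ i, A j i * y i) ^ 2 ∂stdGaussianPi J =
      ∑ j, (∑ i, A j i * y i) ^ 2 := fun y => by
    rw [← integral_linearForm_sq]
    simp only [mul_comm]
  simp only [h]
  rw [integral_finsetSum]
  · simp only [integral_linearForm_sq]
  · intro j _
    have := integrable_eval_stdGaussianPi ((∑ i, C (A j i) * X i) ^ 2 : MvPolynomial K ℝ)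
    simpa using this

theorem quarter_sqrt_le_integral_abs_bilinear {J K : Type*} [Fintype J] [Fintype K]
    (A : J → K → ℝ) :
    √(∑ j, ∑ i, A j i ^ 2) / 4 ≤
      ∫ z, |∑ j, z.1 j * ∑ i, A j i * z.2 i| ∂(stdGaussianPi J).prod (stdGaussianPi K) := by
  set N := √(∑ j, ∑ i, A j i ^ 2) with hN
  let a : J → ℝ := fun j => √(∑ i, A j i ^ 2)
  have ha : ∀ j, a j ^ 2 = ∑ i, A j i ^ 2 := fun j =>
    Real.sq_sqrt (Finset.sum_nonneg fun i _ => sq_nonneg _)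
  have hNa : ∑ j, a j ^ 2 = N ^ 2 := by
    rw [hN, Real.sq_sqrt (Finset.sum_nonneg fun j _ => Finset.sum_nonneg fun i _ => sq_nonneg _)]
    exact Finset.sum_congr rfl fun j _ => ha j
  rcases (Real.sqrt_nonneg (∑ j, ∑ i, A j i ^ 2)).eq_or_lt' with h0 | hpos
  · rw [← hN] at h0
    rw [h0, zero_div]
    exact integral_nonneg fun z => abs_nonneg _
  rw [← hN] at hpos
  have hint := ((memLp_bilinear_stdGaussianPi A).integrable (by norm_num)).abs
  rw [integral_prod_symm _ hint]
  have habs : ∀ j, Integrable (fun y : K → ℝ => |∑ i, A j i * y i|) (stdGaussianPi K) := fun j =>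
    (integrable_finsetSum _ fun i _ => (integrable_coord_stdGaussianPi i).const_mul _).abs
  calc N / 4 = ∑ j, a j / (2 * N) * (a j / 2) := by
        have : ∀ j, a j / (2 * N) * (a j / 2) = a j ^ 2 / (4 * N) := fun j => by ring
        simp only [this]
        rw [← Finset.sum_div, hNa]
        field_simp
    _ ≤ ∑ j, a j / (2 * N) * ∫ y, |∑ i, A j i * y i| ∂stdGaussianPi K := by
        gcongr with j
        exact half_sqrt_le_integral_abs_linearForm _
    _ = ∫ y, ∑ j, a j / (2 * N) * |∑ i, A j i * y i| ∂stdGaussianPi K := by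
        rw [integral_finsetSum _ fun j _ => (habs j).const_mul _]
        simp only [integral_const_mul]
    _ ≤ _ := by
        refine integral_mono (integrable_finsetSum _ fun j _ => (habs j).const_mul _)
          hint.integral_prod_right fun y => ?_
        have h1 : √(∑ j, (∑ i, A j i * y i) ^ 2) / 2 ≤
            ∫ w : J → ℝ, |∑ j, w j * ∑ i, A j i * y i| ∂stdGaussianPi J := by
          have := half_sqrt_le_integral_abs_linearForm fun j => ∑ i, A j i * y i
          simpa only [mul_comm] using this
        refine le_trans ?_ h1
        have hcs := Real.sum_mul_le_sqrt_mul_sqrt Finset.univ a fun j => |∑ i, A j i * y i|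
        simp only [sq_abs, hNa, Real.sqrt_sq hpos.le] at hcs
        have : ∑ j, a j / (2 * N) * |∑ i, A j i * y i| =
            (∑ j, a j * |∑ i, A j i * y i|) / (2 * N) := by
          rw [Finset.sum_div]
          exact Finset.sum_congr rfl fun j _ => by ring
        simp only [this]
        rw [div_le_div_iff₀ (by positivity) two_pos]
        linarith

/-- If the matrix `A` dominates the vector `p`, then the bilinear form of `A` exceeds the linear
form of `p` at Gaussian points with probability bounded below. -/
theorem le_measureReal_bilinear_gt {J K : Type*} [Fintype J] [Fintype K] (p : J → ℝ)
    (A : J → K → ℝ) {t : ℝ} (h : 64 * t ^ 2 * ∑ j, p j ^ 2 < ∑ j, ∑ i, A j i ^ 2) :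
    1 / 64 ≤ ((stdGaussianPi J).prod (stdGaussianPi K)).real
      {z | t * |∑ j, z.1 j * p j| < |∑ j, z.1 j * ∑ i, A j i * z.2 i|} := by
  set μ := (stdGaussianPi J).prod (stdGaussianPi K)
  set S : Set ((J → ℝ) × (K → ℝ)) :=
    {z | t * |∑ j, z.1 j * p j| < |∑ j, z.1 j * ∑ i, A j i * z.2 i|}
  have hS : MeasurableSet S := measurableSet_lt (by fun_prop) (by fun_prop)
  have hsum : 0 < ∑ j, ∑ i, A j i ^ 2 := lt_of_le_of_lt
    (mul_nonneg (by positivity) (Finset.sum_nonneg fun j _ => sq_nonneg _)) h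
  set N := √(∑ j, ∑ i, A j i ^ 2) with hN
  have hNpos : 0 < N := Real.sqrt_pos.2 hsum
  have hNsq : ∑ j, ∑ i, A j i ^ 2 = N ^ 2 := (Real.sq_sqrt hsum.le).symm
  have hI1 := (memLp_bilinear_stdGaussianPi A).integrable_sq
  have hI2 : Integrable (fun z : (J → ℝ) × (K → ℝ) => (∑ j, z.1 j * p j) ^ 2) μ := by
    have := integrable_eval_stdGaussianPi ((∑ j, X j * C (p j)) ^ 2 : MvPolynomial J ℝ)
    simp only [map_pow, map_sum, map_mul, eval_X, eval_C] at this
    exact this.comp_fst _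
  have hE2 : ∫ z, (∑ j, z.1 j * p j) ^ 2 ∂μ = ∑ j, p j ^ 2 := by
    rw [integral_fun_fst (fun w : J → ℝ => (∑ j, w j * p j) ^ 2)]
    simp only [probReal_univ, one_smul, ← integral_linearForm_sq, mul_comm]
  have hpt : ∀ z : (J → ℝ) × (K → ℝ), |∑ j, z.1 j * ∑ i, A j i * z.2 i| ≤
      (1 / (16 * N)) * (∑ j, z.1 j * ∑ i, A j i * z.2 i) ^ 2 +
        (4 * N) * S.indicator (fun _ => (1 : ℝ)) z + ((4 * t ^ 2 / N) * (∑ j, z.1 j * p j) ^ 2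
          + N / 16) := fun z => by
    set Z := ∑ j, z.1 j * ∑ i, A j i * z.2 i with hZ
    set W := ∑ j, z.1 j * p j with hW
    by_cases hz : z ∈ S
    · rw [Set.indicator_of_mem hz]
      have h1 : |Z| ≤ 1 / (16 * N) * Z ^ 2 + 4 * N := by
        rw [← sq_abs Z, ← sub_nonneg]
        have : 1 / (16 * N) * |Z| ^ 2 + 4 * N - |Z| = (|Z| - 8 * N) ^ 2 / (16 * N) := by
          field_simp; ring
        rw [this]; positivity
      have h2 : 0 ≤ 4 * t ^ 2 / N * W ^ 2 + N / 16 := by positivity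
      linarith
    · rw [Set.indicator_of_notMem hz]
      have h0 : |Z| ≤ t * |W| := not_lt.1 hz
      have h1 : t * |W| ≤ 4 * t ^ 2 / N * W ^ 2 + N / 16 := by
        rw [← sq_abs W, ← sub_nonneg]
        have : 4 * t ^ 2 / N * |W| ^ 2 + N / 16 - t * |W| = (8 * t * |W| - N) ^ 2 / (16 * N) := by
          field_simp; ring
        rw [this]; positivity
      have h2 : 0 ≤ 1 / (16 * N) * Z ^ 2 := by positivity
      linarith
  have hI3 : Integrable (S.indicator fun _ => (1 : ℝ)) μ :=
    (integrable_const 1).indicator hS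
  have hle := (quarter_sqrt_le_integral_abs_bilinear A).trans
    (integral_mono ((memLp_bilinear_stdGaussianPi A).integrable (by norm_num)).abs
      (((hI1.const_mul _).add (hI3.const_mul _)).add ((hI2.const_mul _).add (integrable_const _)))
      hpt)
  have hA : Integrable (fun z => (1 / (16 * N)) * (∑ j, z.1 j * ∑ i, A j i * z.2 i) ^ 2 +
      (4 * N) * S.indicator (fun _ => (1 : ℝ)) z) μ := (hI1.const_mul _).add (hI3.const_mul _)
  have hB : Integrable (fun z : (J → ℝ) × (K → ℝ) =>
      (4 * t ^ 2 / N) * (∑ j, z.1 j * p j) ^ 2 + N / 16) μ :=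
    (hI2.const_mul _).add (integrable_const _)
  simp only [Pi.add_apply] at hle
  rw [integral_add hA hB,
    integral_add (hI1.const_mul _) (hI3.const_mul _),
    integral_add (hI2.const_mul _) (integrable_const _)] at hle
  simp only [integral_const_mul, integral_const, probReal_univ, one_smul] at hle
  rw [integral_bilinear_sq, hE2, integral_indicator_const _ hS, ← hN, hNsq, smul_eq_mul,
    mul_one] at hle
  rw [hNsq] at h
  have h3 : 1 / (16 * N) * N ^ 2 = N / 16 := by field_simp
  have h4 : 4 * t ^ 2 / N * ∑ j, p j ^ 2 ≤ N / 16 := by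
    rw [div_mul_eq_mul_div, div_le_div_iff₀ hNpos (by norm_num)]
    nlinarith
  rw [h3] at hle
  have h5 : N * (1 / 64) ≤ N * μ.real S := by linarith
  exact le_of_mul_le_mul_left h5 hNpos

/-- For a finite family of polynomials of degree at most `d`, the squared length of the vector of
all first derivatives is rarely much larger than the squared length of the vector of values. -/
theorem measure_sum_pderiv_sq_gt_le {n d : ℕ} {J : Type*} [Fintype J] (hd : 1 ≤ d)
    (p : J → MvPolynomial (Fin n) ℝ) (hp : ∀ j, (p j).totalDegree ≤ d) {t : ℝ} (ht : 3 * d ≤ t) :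
    stdGaussianPi (Fin n) {x | 64 * t ^ 2 * ∑ j, eval x (p j) ^ 2 <
      ∑ j, ∑ i, eval x (pderiv i (p j)) ^ 2} ≤ ENNReal.ofReal (3072 * d ^ 2 / t) := by
  have hc : ∀ q : MvPolynomial (Fin n) ℝ, Continuous
      fun z : (J → ℝ) × ((Fin n → ℝ) × (Fin n → ℝ)) => eval z.2.1 q := fun q =>
    (MvPolynomial.continuous_eval q).comp (by fun_prop)
  set B : Set ((J → ℝ) × ((Fin n → ℝ) × (Fin n → ℝ))) :=
    {z | t * |∑ j, z.1 j * eval z.2.1 (p j)| <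
      |∑ j, z.1 j * ∑ i, eval z.2.1 (pderiv i (p j)) * z.2.2 i|}
  have hB : MeasurableSet B := by
    refine measurableSet_lt (Continuous.measurable ?_) (Continuous.measurable ?_)
    · fun_prop
    · fun_prop
  set G : Set (Fin n → ℝ) := {x | 64 * t ^ 2 * ∑ j, eval x (p j) ^ 2 <
      ∑ j, ∑ i, eval x (pderiv i (p j)) ^ 2}
  let σ : (Fin n → ℝ) × ((J → ℝ) × (Fin n → ℝ)) → (J → ℝ) × ((Fin n → ℝ) × (Fin n → ℝ)) :=
    fun z => (z.2.1, (z.1, z.2.2))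
  have hσ : Measurable σ := by fun_prop
  have hswap : ((stdGaussianPi (Fin n)).prod ((stdGaussianPi J).prod (stdGaussianPi (Fin n))))
      (σ ⁻¹' B) =
      ((stdGaussianPi J).prod ((stdGaussianPi (Fin n)).prod (stdGaussianPi (Fin n)))) B := by
    rw [Measure.prod_apply (hσ hB), Measure.prod_apply hB]
    have e1 : ∀ x : Fin n → ℝ, ((stdGaussianPi J).prod (stdGaussianPi (Fin n)))
        (Prod.mk x ⁻¹' (σ ⁻¹' B)) =
          ∫⁻ w, stdGaussianPi (Fin n) {y | (w, (x, y)) ∈ B} ∂stdGaussianPi J := fun x =>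
      Measure.prod_apply (measurable_prodMk_left (hσ hB))
    have e2 : ∀ w : J → ℝ, ((stdGaussianPi (Fin n)).prod (stdGaussianPi (Fin n)))
        (Prod.mk w ⁻¹' B) =
          ∫⁻ x, stdGaussianPi (Fin n) {y | (w, (x, y)) ∈ B} ∂stdGaussianPi (Fin n) := fun w =>
      Measure.prod_apply (measurable_prodMk_left hB)
    simp only [e1, e2]
    refine lintegral_lintegral_swap (Measurable.aemeasurable ?_)
    have hm : Measurable fun z : ((Fin n → ℝ) × (J → ℝ)) × (Fin n → ℝ) =>
        (z.1.2, (z.1.1, z.2)) := by fun_prop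
    exact measurable_measure_prodMk_left (hm hB)
  have hle : ENNReal.ofReal (1 / 64) * stdGaussianPi (Fin n) G ≤
      ENNReal.ofReal (48 * d ^ 2 / t) := by
    refine le_trans ?_ (hswap.trans_le (measure_combination_gt_le hd p hp ht))
    rw [Measure.prod_apply (hσ hB)]
    refine (mul_meas_ge_le_lintegral (measurable_measure_prodMk_left (hσ hB))
      (ENNReal.ofReal (1 / 64))).trans' ?_
    gcongr
    intro x hx
    have := le_measureReal_bilinear_gt (fun j => eval x (p j))
      (fun j i => eval x (pderiv i (p j))) hx
    exact ENNReal.ofReal_le_of_le_toReal this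
  calc stdGaussianPi (Fin n) G
      = ENNReal.ofReal 64 * (ENNReal.ofReal (1 / 64) * stdGaussianPi (Fin n) G) := by
        rw [← mul_assoc, ← ENNReal.ofReal_mul (by norm_num)]
        norm_num
    _ ≤ ENNReal.ofReal 64 * ENNReal.ofReal (48 * d ^ 2 / t) := by gcongr
    _ = _ := by
        rw [← ENNReal.ofReal_mul (by norm_num)]
        congr 1; ring

/-- The unnormalized Hermite coefficient `∫ p(t) He_l(t) dγ(t)` of a univariate polynomial. -/
noncomputable def hermiteMoment (l : ℕ) (p : Polynomial ℝ) : ℝ :=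
  ∫ t, p.eval t * ((Polynomial.hermite l).map (Int.castRingHom ℝ)).eval t ∂gaussianReal 0 1

theorem hermiteMoment_succ (l : ℕ) (p : Polynomial ℝ) :
    hermiteMoment (l + 1) p = hermiteMoment l (Polynomial.derivative p) := by
  unfold hermiteMoment
  set H := (Polynomial.hermite l).map (Int.castRingHom ℝ) with hH
  have h1 : (Polynomial.hermite (l + 1)).map (Int.castRingHom ℝ) =
      Polynomial.X * H - Polynomial.derivative H := by
    rw [Polynomial.hermite_succ, Polynomial.map_sub, Polynomial.map_mul, Polynomial.map_X,
      Polynomial.derivative_map]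
  have h2 := integral_mul_polynomial_gaussianReal (p * H)
  have h3 := integrable_polynomial_gaussianReal (Polynomial.X * (p * H))
  have h4 := integrable_polynomial_gaussianReal (p * Polynomial.derivative H)
  have h5 := integrable_polynomial_gaussianReal (Polynomial.derivative p * H)
  simp only [Polynomial.eval_mul, Polynomial.eval_X, Polynomial.derivative_mul,
    Polynomial.eval_add] at h2 h3 h4 h5
  rw [integral_add h5 h4] at h2
  have h6 : ∫ t, p.eval t * (Polynomial.X * H - Polynomial.derivative H).eval t ∂gaussianReal 0 1 =
      ∫ t, t * (p.eval t * H.eval t) ∂gaussianReal 0 1 -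
        ∫ t, p.eval t * (Polynomial.derivative H).eval t ∂gaussianReal 0 1 := by
    rw [← integral_sub h3 h4]
    congr 1
    ext t
    simp only [Polynomial.eval_sub, Polynomial.eval_mul, Polynomial.eval_X]
    ring
  rw [h1, h6, h2]
  ring

theorem hermiteMoment_C_mul (l : ℕ) (c : ℝ) (p : Polynomial ℝ) :
    hermiteMoment l (Polynomial.C c * p) = c * hermiteMoment l p := by
  simp only [hermiteMoment, Polynomial.eval_mul, Polynomial.eval_C, mul_assoc,
    integral_const_mul]

theorem hermiteMoment_zero_right (l : ℕ) : hermiteMoment l 0 = 0 := by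
  simp [hermiteMoment]

theorem hermiteMoment_X_pow_succ (l k : ℕ) :
    hermiteMoment (l + 1) (Polynomial.X ^ (k + 1)) =
      (k + 1) * hermiteMoment l (Polynomial.X ^ k) := by
  rw [hermiteMoment_succ, Polynomial.derivative_X_pow, hermiteMoment_C_mul]
  simp

theorem hermiteMoment_X_pow_eq_zero {l k : ℕ} (h : k < l) :
    hermiteMoment l (Polynomial.X ^ k) = 0 := by
  induction l generalizing k with
  | zero => omega
  | succ l ih =>
    cases k with
    | zero => simp [hermiteMoment_succ, hermiteMoment_zero_right]
    | succ k => rw [hermiteMoment_X_pow_succ, ih (by omega), mul_zero]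

/-- The polynomial `x ↦ ∫ (a x + b t)^k He_l(t) dγ(t)`. -/
noncomputable def zoomMonomial (a b : ℝ) (k l : ℕ) : Polynomial ℝ :=
  ∑ s ∈ Finset.range (k + 1), Polynomial.monomial s
    (k.choose s * a ^ s * b ^ (k - s) * hermiteMoment l (Polynomial.X ^ (k - s)))

theorem coeff_zoomMonomial (a b : ℝ) (k l s : ℕ) : (zoomMonomial a b k l).coeff s =
    k.choose s * a ^ s * b ^ (k - s) * hermiteMoment l (Polynomial.X ^ (k - s)) := by
  simp only [zoomMonomial, Polynomial.finsetSum_coeff, Polynomial.coeff_monomial,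
    Finset.sum_ite_eq', Finset.mem_range]
  split_ifs with h
  · rfl
  · rw [Nat.choose_eq_zero_of_lt (by omega)]
    simp

theorem natDegree_zoomMonomial_le (a b : ℝ) (k l : ℕ) : (zoomMonomial a b k l).natDegree ≤ k :=
  Polynomial.natDegree_sum_le_of_forall_le _ _ fun s hs =>
    (Polynomial.natDegree_monomial_le _).trans (by simpa [Nat.lt_succ_iff] using hs)

theorem eval_zoomMonomial (a b : ℝ) (k l : ℕ) (x : ℝ) : (zoomMonomial a b k l).eval x =
    ∫ t, (a * x + b * t) ^ k * ((Polynomial.hermite l).map (Int.castRingHom ℝ)).eval t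
      ∂gaussianReal 0 1 := by
  have hint : ∀ s, Integrable (fun t : ℝ => t ^ (k - s) *
      ((Polynomial.hermite l).map (Int.castRingHom ℝ)).eval t) (gaussianReal 0 1) := fun s => by
    have := integrable_polynomial_gaussianReal
      (Polynomial.X ^ (k - s) * (Polynomial.hermite l).map (Int.castRingHom ℝ))
    simpa only [Polynomial.eval_mul, Polynomial.eval_pow, Polynomial.eval_X] using this
  have h : ∀ t : ℝ, (a * x + b * t) ^ k *
      ((Polynomial.hermite l).map (Int.castRingHom ℝ)).eval t =
      ∑ s ∈ Finset.range (k + 1), (k.choose s * a ^ s * b ^ (k - s) * x ^ s) * (t ^ (k - s) *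
        ((Polynomial.hermite l).map (Int.castRingHom ℝ)).eval t) := fun t => by
    rw [add_pow, Finset.sum_mul]
    refine Finset.sum_congr rfl fun s _ => ?_
    rw [mul_pow, mul_pow]
    ring
  simp only [h]
  rw [integral_finsetSum _ fun s _ => (hint s).const_mul _]
  simp only [integral_const_mul, zoomMonomial, Polynomial.eval_finsetSum, Polynomial.eval_monomial]
  refine Finset.sum_congr rfl fun s _ => ?_
  simp only [hermiteMoment, Polynomial.eval_pow, Polynomial.eval_X]
  ring

theorem zoomMonomial_eq_zero (a b : ℝ) {k l : ℕ} (h : k < l) : zoomMonomial a b k l = 0 := by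
  ext s
  rw [coeff_zoomMonomial, hermiteMoment_X_pow_eq_zero (by omega)]
  simp

theorem C_mul_zoomMonomial_succ (a b : ℝ) (k l : ℕ) :
    Polynomial.C a * zoomMonomial a b k (l + 1) =
      Polynomial.C b * Polynomial.derivative (zoomMonomial a b k l) := by
  ext s
  rw [Polynomial.coeff_C_mul, Polynomial.coeff_C_mul, Polynomial.coeff_derivative,
    coeff_zoomMonomial, coeff_zoomMonomial]
  rcases lt_or_ge s k with h | h
  · obtain ⟨j, rfl⟩ := Nat.exists_eq_add_of_lt h
    have e1 : s + j + 1 - s = j + 1 := by omega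
    have e2 : s + j + 1 - (s + 1) = j := by omega
    have hch := Nat.choose_succ_right_eq (s + j + 1) s
    rw [e1] at hch
    have hch' : ((s + j + 1).choose (s + 1) : ℝ) * (s + 1) = (s + j + 1).choose s * (j + 1) := by
      exact_mod_cast hch
    rw [e1, e2, hermiteMoment_X_pow_succ]
    linear_combination (-(a ^ (s + 1) * b ^ (j + 1) *
      hermiteMoment l (Polynomial.X ^ j))) * hch'
  · rw [Nat.sub_eq_zero_of_le h, Nat.choose_eq_zero_of_lt (show k < s + 1 by omega),
      hermiteMoment_X_pow_eq_zero (Nat.succ_pos l)]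
    simp

/-- The polynomial `x ↦ ∫ (∏ i, (a x_i + b y_i)^{m_i} He_{α_i}(y_i)) dγ_n(y)`. -/
noncomputable def zoomMonomialMv {n : ℕ} (a b : ℝ) (m α : Fin n → ℕ) : MvPolynomial (Fin n) ℝ :=
  ∏ i, Polynomial.aeval (X i : MvPolynomial (Fin n) ℝ) (zoomMonomial a b (m i) (α i))

theorem totalDegree_zoomMonomialMv_le {n : ℕ} (a b : ℝ) (m α : Fin n → ℕ) :
    (zoomMonomialMv a b m α).totalDegree ≤ ∑ i, m i := by
  refine (totalDegree_finsetProd _ _).trans (Finset.sum_le_sum fun i _ => ?_)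
  rw [Polynomial.aeval_eq_sum_range]
  refine totalDegree_finsetSum_le fun k hk => (totalDegree_smul_le _ _).trans ?_
  rw [totalDegree_X_pow]
  have := natDegree_zoomMonomial_le a b (m i) (α i)
  have := Finset.mem_range.1 hk
  omega

theorem eval_aeval_X {σ : Type*} (i : σ) (q : Polynomial ℝ) (x : σ → ℝ) :
    eval x (Polynomial.aeval (X i : MvPolynomial σ ℝ) q) = q.eval (x i) := by
  rw [Polynomial.aeval_def, Polynomial.hom_eval₂, algebraMap_eq, eval_X,
    show (eval x).comp C = RingHom.id ℝ from RingHom.ext fun r => eval_C r, Polynomial.eval₂_id]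

theorem eval_zoomMonomialMv {n : ℕ} (a b : ℝ) (m α : Fin n → ℕ) (x : Fin n → ℝ) :
    eval x (zoomMonomialMv a b m α) = ∫ y, (∏ i, (a * x i + b * y i) ^ m i) *
      ∏ i, ((Polynomial.hermite (α i)).map (Int.castRingHom ℝ)).eval (y i)
        ∂stdGaussianPi (Fin n) := by
  simp only [zoomMonomialMv, map_prod, eval_aeval_X, ← Finset.prod_mul_distrib]
  rw [integral_fintype_prod_eq_prod (fun i t => (a * x i + b * t) ^ m i *
    ((Polynomial.hermite (α i)).map (Int.castRingHom ℝ)).eval t)]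
  exact Finset.prod_congr rfl fun i _ => eval_zoomMonomial a b _ _ _

theorem zoomMonomialMv_eq_zero {n : ℕ} (a b : ℝ) {m α : Fin n → ℕ} (h : ∑ i, m i < ∑ i, α i) :
    zoomMonomialMv a b m α = 0 := by
  obtain ⟨i, hi, h⟩ := Finset.exists_lt_of_sum_lt h
  exact Finset.prod_eq_zero hi (by rw [zoomMonomial_eq_zero a b h, map_zero])

theorem C_mul_zoomMonomialMv {n : ℕ} (a b : ℝ) (m α : Fin n → ℕ) (i : Fin n) :
    C a * zoomMonomialMv a b m (α + Pi.single i 1) =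
      C b * pderiv i (zoomMonomialMv a b m α) := by
  have hz : pderiv i (∏ j ∈ Finset.univ.erase i,
      Polynomial.aeval (X j : MvPolynomial (Fin n) ℝ) (zoomMonomial a b (m j) (α j))) = 0 := by
    refine Finset.prod_induction _ (fun f => pderiv i f = 0) (fun f g hf hg => ?_) ?_
      fun j hj => ?_
    · rw [pderiv_mul, hf, hg, zero_mul, mul_zero, add_zero]
    · exact pderiv_one
    · rw [Derivation.map_aeval, pderiv_X_of_ne (Finset.ne_of_mem_erase hj), smul_zero]
  unfold zoomMonomialMv
  rw [← Finset.mul_prod_erase _ _ (Finset.mem_univ i),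
    ← Finset.mul_prod_erase _ (fun j => Polynomial.aeval (X j : MvPolynomial (Fin n) ℝ)
      (zoomMonomial a b (m j) (α j))) (Finset.mem_univ i), pderiv_mul, hz, mul_zero, add_zero,
    Derivation.map_aeval, pderiv_X_self, smul_eq_mul, mul_one, ← mul_assoc, ← mul_assoc]
  congr 1
  · rw [Pi.add_apply, Pi.single_eq_same]
    have := congrArg (Polynomial.aeval (X i : MvPolynomial (Fin n) ℝ))
      (C_mul_zoomMonomial_succ a b (m i) (α i))
    simpa only [map_mul, Polynomial.aeval_C, algebraMap_eq] using this
  · refine Finset.prod_congr rfl fun j hj => ?_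
    rw [Pi.add_apply, Pi.single_eq_of_ne (Finset.ne_of_mem_erase hj), add_zero]

/-- The exponents of total degree at most `d`. -/
noncomputable def exponentsLE (n d : ℕ) : Finset (Fin n →₀ ℕ) :=
  (Finsupp.finite_of_degree_le d).toFinset

theorem mem_exponentsLE {n d : ℕ} {m : Fin n →₀ ℕ} : m ∈ exponentsLE n d ↔ ∑ i, m i ≤ d := by
  simp [exponentsLE, Finsupp.degree_eq_sum]

theorem support_subset_exponentsLE {n d : ℕ} {g : MvPolynomial (Fin n) ℝ}
    (hg : g.totalDegree ≤ d) : g.support ⊆ exponentsLE n d := fun m hm =>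
  mem_exponentsLE.2 <| by
    have := (le_totalDegree hm).trans hg
    rwa [Finsupp.sum_fintype _ _ fun _ => rfl] at this

theorem eval_zoom {n d : ℕ} {g : MvPolynomial (Fin n) ℝ} (hg : g.totalDegree ≤ d) (lam : ℝ)
    (x y : Fin n → ℝ) : eval y (zoom g lam x) =
      ∑ m : exponentsLE n d,
        coeff m g * ∏ i, (√(1 - lam) * x i + √lam * y i) ^ (m : Fin n →₀ ℕ) i := by
  rw [zoom, aeval_def, eval₂_eq']
  simp only [map_sum, map_mul, map_prod, map_pow, map_add, eval_C, eval_X, algebraMap_eq]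
  rw [Finset.sum_coe_sort (exponentsLE n d) fun m =>
    coeff m g * ∏ i, (√(1 - lam) * x i + √lam * y i) ^ m i]
  refine Finset.sum_subset (support_subset_exponentsLE hg) fun m _ hm => ?_
  rw [notMem_support_iff.1 hm, zero_mul]

/-- The Hermite coefficient of a polynomial with respect to the monic Hermite polynomials. -/
noncomputable def monicHermiteCoeff {n : ℕ} (g : MvPolynomial (Fin n) ℝ) (α : Fin n → ℕ) : ℝ :=
  ∫ y, eval y g * ∏ i, ((Polynomial.hermite (α i)).map (Int.castRingHom ℝ)).eval (y i)
    ∂stdGaussianPi (Fin n)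

theorem hermiteCoeff_eq_div {n : ℕ} (g : MvPolynomial (Fin n) ℝ) (α : Fin n → ℕ) :
    hermiteCoeff g α = monicHermiteCoeff g α / ∏ i, √((α i).factorial) := by
  simp only [hermiteCoeff, hermiteCoeffF, monicHermiteCoeff, hermiteMv, hermiteFn,
    Finset.prod_div_distrib, ← mul_div_assoc, gaussianN, integral_div]

theorem hermiteCoeff_sq_le {n : ℕ} (g : MvPolynomial (Fin n) ℝ) (α : Fin n → ℕ) :
    hermiteCoeff g α ^ 2 ≤ monicHermiteCoeff g α ^ 2 := by
  rw [hermiteCoeff_eq_div, div_pow]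
  refine div_le_self (sq_nonneg _) (one_le_pow₀
    (Finset.prod_induction _ (fun r : ℝ => 1 ≤ r) (fun _ _ => one_le_mul_of_one_le_of_one_le) le_rfl
      fun i _ => ?_))
  rw [Real.one_le_sqrt]
  exact_mod_cast Nat.one_le_iff_ne_zero.2 (Nat.factorial_ne_zero _)

theorem monicHermiteCoeff_zoom {n d : ℕ} {g : MvPolynomial (Fin n) ℝ} (hg : g.totalDegree ≤ d)
    (lam : ℝ) (x : Fin n → ℝ) (α : Fin n → ℕ) : monicHermiteCoeff (zoom g lam x) α =
      ∑ m : exponentsLE n d, coeff m g * eval x (zoomMonomialMv (√(1 - lam)) (√lam) m α) := by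
  simp only [monicHermiteCoeff, eval_zoom hg, Finset.sum_mul, mul_assoc]
  rw [integral_finsetSum]
  · simp only [integral_const_mul, eval_zoomMonomialMv]
  · intro m _
    refine Integrable.const_mul ?_ _
    have := integrable_eval_stdGaussianPi
      ((∏ i, (C (√(1 - lam) * x i) + C (√lam) * X i) ^ (m : Fin n →₀ ℕ) i) *
        ∏ i, Polynomial.aeval (X i : MvPolynomial (Fin n) ℝ)
          ((Polynomial.hermite (α i)).map (Int.castRingHom ℝ)))
    simpa only [map_mul, map_prod, map_pow, map_add, eval_C, eval_X, eval_aeval_X] using this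

theorem monicHermiteCoeff_zoom_eq_zero {n d : ℕ} {g : MvPolynomial (Fin n) ℝ}
    (hg : g.totalDegree ≤ d) (lam : ℝ) (x : Fin n → ℝ) {α : Fin n → ℕ} (hα : d < ∑ i, α i) :
    monicHermiteCoeff (zoom g lam x) α = 0 := by
  rw [monicHermiteCoeff_zoom hg]
  refine Finset.sum_eq_zero fun m _ => ?_
  rw [zoomMonomialMv_eq_zero _ _ ((mem_exponentsLE.1 m.2).trans_lt hα), map_zero, mul_zero]

/-- The Gaussian average of the square of a linear form with polynomial coefficients is a sum of
squares of linear forms. -/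
theorem exists_integral_sq_eq_sum_sq {ι S : Type*} [Fintype ι] [Fintype S]
    (c : S → MvPolynomial ι ℝ) : ∃ (r : ℕ) (v : Fin r → S → ℝ), ∀ q : S → ℝ,
      ∫ υ, (∑ m, eval υ (c m) * q m) ^ 2 ∂stdGaussianPi ι = ∑ j, (∑ m, v j m * q m) ^ 2 := by
  let M : Matrix S S ℝ := fun m m' => ∫ υ, eval υ (c m) * eval υ (c m') ∂stdGaussianPi ι
  have hint : ∀ m m', Integrable (fun υ => eval υ (c m) * eval υ (c m')) (stdGaussianPi ι) :=
    fun m m' => by simpa only [map_mul] using integrable_eval_stdGaussianPi (c m * c m')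
  have hM : ∀ q : S → ℝ, ∫ υ, (∑ m, eval υ (c m) * q m) ^ 2 ∂stdGaussianPi ι =
      ∑ m, ∑ m', q m * q m' * M m m' := fun q => by
    have : ∀ υ, (∑ m, eval υ (c m) * q m) ^ 2 =
        ∑ m, ∑ m', q m * q m' * (eval υ (c m) * eval υ (c m')) := fun υ => by
      rw [sq, Finset.sum_mul_sum]
      exact Finset.sum_congr rfl fun m _ => Finset.sum_congr rfl fun m' _ => by ring
    simp only [this]
    rw [integral_finsetSum _ fun m _ => integrable_finsetSum _ fun m' _ => (hint m m').const_mul _]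
    refine Finset.sum_congr rfl fun m _ => ?_
    rw [integral_finsetSum _ fun m' _ => (hint m m').const_mul _]
    exact Finset.sum_congr rfl fun m' _ => integral_const_mul _ _
  have hpsd : M.PosSemidef := by
    refine Matrix.PosSemidef.of_dotProduct_mulVec_nonneg ?_ fun q => ?_
    · ext m m'
      rw [Matrix.conjTranspose_apply, star_trivial]
      simp only [M, mul_comm]
    · have h0 : 0 ≤ ∑ m, ∑ m', q m * q m' * M m m' := hM q ▸ integral_nonneg fun υ => sq_nonneg _
      refine h0.trans_eq ?_
      simp only [dotProduct, Matrix.mulVec, star_trivial, Finset.mul_sum]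
      exact Finset.sum_congr rfl fun m _ => Finset.sum_congr rfl fun m' _ => by ring
  obtain ⟨r, v, hv⟩ := Matrix.posSemidef_iff_eq_sum_vecMulVec.1 hpsd
  refine ⟨r, v, fun q => ?_⟩
  have hv' : ∀ m m', M m m' = ∑ j, v j m * v j m' := fun m m' => by
    rw [hv, Matrix.sum_apply]
    simp [Matrix.vecMulVec_apply]
  have hsq : ∀ j, (∑ m, v j m * q m) ^ 2 = ∑ m, ∑ m', q m * q m' * (v j m * v j m') := fun j => by
    rw [sq, Finset.sum_mul_sum]
    exact Finset.sum_congr rfl fun m _ => Finset.sum_congr rfl fun m' _ => by ring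
  simp only [hM, hsq]
  symm
  rw [Finset.sum_comm]
  refine Finset.sum_congr rfl fun m _ => ?_
  rw [Finset.sum_comm]
  refine Finset.sum_congr rfl fun m' _ => ?_
  rw [hv', Finset.mul_sum]

/-- The sum of the squares at `x` of the polynomials `P j α` with `|α| = k`. -/
noncomputable def levelEnergy {n : ℕ} {J : Type*} [Fintype J]
    (P : J → (Fin n → ℕ) → MvPolynomial (Fin n) ℝ) (k : ℕ) (x : Fin n → ℝ) : ℝ :=
  ∑ α ∈ Finset.piAntidiag Finset.univ k, ∑ j, eval x (P j α) ^ 2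

theorem levelEnergy_nonneg {n : ℕ} {J : Type*} [Fintype J]
    (P : J → (Fin n → ℕ) → MvPolynomial (Fin n) ℝ) (k : ℕ) (x : Fin n → ℝ) :
    0 ≤ levelEnergy P k x :=
  Finset.sum_nonneg fun _ _ => Finset.sum_nonneg fun _ _ => sq_nonneg _

theorem sum_piAntidiag_succ_le {n : ℕ} (k : ℕ) {F : (Fin n → ℕ) → ℝ} (hF : ∀ α, 0 ≤ F α) :
    ∑ α ∈ Finset.piAntidiag Finset.univ (k + 1), F α ≤
      ∑ α ∈ Finset.piAntidiag Finset.univ k, ∑ i, F (α + Pi.single i 1) := by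
  rw [← Finset.sum_product']
  refine le_trans ?_ (Finset.sum_image_le_of_nonneg
    (g := fun z : (Fin n → ℕ) × Fin n => z.1 + Pi.single z.2 1) (f := F) fun α _ => hF α)
  refine Finset.sum_le_sum_of_subset_of_nonneg (fun α hα => ?_) fun α _ _ => hF α
  simp only [Finset.mem_piAntidiag, Finset.mem_univ, implies_true, and_true] at hα
  obtain ⟨i, -, hi⟩ : ∃ i ∈ Finset.univ, 0 < α i :=
    Finset.sum_pos_iff.1 (hα ▸ Nat.succ_pos k)
  have hle : Pi.single i 1 ≤ α := by
    intro j
    rcases eq_or_ne j i with rfl | hj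
    · rw [Pi.single_eq_same]; exact hi
    · rw [Pi.single_eq_of_ne hj]; exact Nat.zero_le _
  have hsum : ∑ j, (α - Pi.single i 1 + Pi.single i 1 : Fin n → ℕ) j = k + 1 := by
    rw [tsub_add_cancel_of_le hle, hα]
  refine Finset.mem_image.2 ⟨(α - Pi.single i 1, i), ?_, tsub_add_cancel_of_le hle⟩
  simp only [Finset.mem_product, Finset.mem_piAntidiag, Finset.mem_univ, implies_true, and_true]
  simp only [Pi.add_apply, Finset.sum_add_distrib, Finset.sum_pi_single', Finset.mem_univ,
    if_true] at hsum
  simpa using hsum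

theorem mul_levelEnergy_succ_le {n : ℕ} {J : Type*} [Fintype J]
    {P : J → (Fin n → ℕ) → MvPolynomial (Fin n) ℝ} {a b : ℝ}
    (hP : ∀ j α i, C a * P j (α + Pi.single i 1) = C b * pderiv i (P j α)) (k : ℕ)
    (x : Fin n → ℝ) :
    a ^ 2 * levelEnergy P (k + 1) x ≤ b ^ 2 * ∑ α ∈ Finset.piAntidiag Finset.univ k, ∑ j, ∑ i,
      eval x (pderiv i (P j α)) ^ 2 := by
  have h : ∀ j α i, a ^ 2 * eval x (P j (α + Pi.single i 1)) ^ 2 =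
      b ^ 2 * eval x (pderiv i (P j α)) ^ 2 := fun j α i => by
    have := congrArg (eval x) (hP j α i)
    simp only [map_mul, eval_C] at this
    rw [← mul_pow, this, mul_pow]
  refine (mul_le_mul_of_nonneg_left (sum_piAntidiag_succ_le k fun α => Finset.sum_nonneg
    fun j _ => sq_nonneg (eval x (P j α))) (sq_nonneg a)).trans_eq ?_
  simp only [Finset.mul_sum, h]
  exact Finset.sum_congr rfl fun α _ => Finset.sum_comm

theorem measure_levelEnergy_succ_gt_le {n d : ℕ} {J : Type*} [Fintype J] (hd : 1 ≤ d)
    {P : J → (Fin n → ℕ) → MvPolynomial (Fin n) ℝ} (hdeg : ∀ j α, (P j α).totalDegree ≤ d)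
    {a b : ℝ} (hP : ∀ j α i, C a * P j (α + Pi.single i 1) = C b * pderiv i (P j α))
    {t : ℝ} (ht : 3 * d ≤ t) :
    stdGaussianPi (Fin n) {x | ∃ k < d,
      64 * t ^ 2 * b ^ 2 * levelEnergy P k x < a ^ 2 * levelEnergy P (k + 1) x} ≤
      ENNReal.ofReal (3072 * d ^ 3 / t) := by
  let Q : (k : ℕ) → (Finset.piAntidiag (Finset.univ : Finset (Fin n)) k) × J →
    MvPolynomial (Fin n) ℝ := fun k z => P z.2 z.1
  have hsub : {x | ∃ k < d,
      64 * t ^ 2 * b ^ 2 * levelEnergy P k x < a ^ 2 * levelEnergy P (k + 1) x} ⊆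
      ⋃ k ∈ Finset.range d, {x | 64 * t ^ 2 * ∑ z, eval x (Q k z) ^ 2 <
        ∑ z, ∑ i, eval x (pderiv i (Q k z)) ^ 2} := by
    rintro x ⟨k, hk, hx⟩
    refine Set.mem_biUnion (Finset.mem_coe.2 (Finset.mem_range.2 hk)) ?_
    have h := hx.trans_le (mul_levelEnergy_succ_le hP k x)
    rw [mul_right_comm, mul_comm _ (b ^ 2)] at h
    have h' := lt_of_mul_lt_mul_left h (sq_nonneg b)
    simp only [Set.mem_ofPred_eq, Q, Fintype.sum_prod_type]
    rw [Finset.sum_coe_sort (Finset.piAntidiag Finset.univ k) fun α => ∑ j, eval x (P j α) ^ 2,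
      Finset.sum_coe_sort (Finset.piAntidiag Finset.univ k)
        fun α => ∑ j, ∑ i, eval x (pderiv i (P j α)) ^ 2]
    exact h'
  calc _ ≤ ∑ k ∈ Finset.range d, ENNReal.ofReal (3072 * d ^ 2 / t) :=
        (measure_mono hsub).trans ((measure_biUnion_finset_le _ _).trans
          (Finset.sum_le_sum fun k _ =>
            measure_sum_pderiv_sq_gt_le hd (Q k) (fun z => hdeg z.2 z.1) ht))
    _ = _ := by
        rw [Finset.sum_const, Finset.card_range, nsmul_eq_mul, ← ENNReal.ofReal_natCast,
          ← ENNReal.ofReal_mul (Nat.cast_nonneg d)]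
        congr 1
        ring

theorem sum_pow_mul_le_of_forall_succ_le {W : ℕ → ℝ} (hW : ∀ k, 0 ≤ W k) {d : ℕ} {c R ε : ℝ}
    (hε0 : 0 ≤ ε) (hε : ε ≤ 1) (hc : R ^ 2 * c ≤ ε / 2) (hstep : ∀ k < d, W (k + 1) ≤ c * W k) :
    ∑ k ∈ Finset.range d, R ^ (2 * (k + 1)) * W (k + 1) ≤ ε * W 0 := by
  set U : ℕ → ℝ := fun k => R ^ (2 * k) * W k
  have hU : ∀ k, 0 ≤ U k := fun k => mul_nonneg (by rw [pow_mul]; positivity) (hW k)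
  have h1 : ∑ k ∈ Finset.range d, U (k + 1) ≤ ε / 2 * ∑ k ∈ Finset.range d, U k := by
    rw [Finset.mul_sum]
    refine Finset.sum_le_sum fun k hk => ?_
    calc U (k + 1) ≤ R ^ (2 * (k + 1)) * (c * W k) :=
          mul_le_mul_of_nonneg_left (hstep k (Finset.mem_range.1 hk))
            (by rw [pow_mul]; positivity)
      _ = R ^ 2 * c * (R ^ (2 * k) * W k) := by ring
      _ ≤ _ := mul_le_mul_of_nonneg_right hc (hU k)
  have h2 : ∑ k ∈ Finset.range d, U (k + 1) + U 0 = ∑ k ∈ Finset.range d, U k + U d := by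
    rw [← Finset.sum_range_succ', Finset.sum_range_succ]
  have h3 : U 0 = W 0 := by simp [U]
  have h4 : 0 ≤ ∑ k ∈ Finset.range d, U (k + 1) := Finset.sum_nonneg fun k _ => hU _
  have h5 := hU d
  change ∑ k ∈ Finset.range d, U (k + 1) ≤ ε * W 0
  nlinarith

theorem hyperVar_zoom_le {n d : ℕ} {g : MvPolynomial (Fin n) ℝ} (hg : g.totalDegree ≤ d)
    (R lam : ℝ) (x : Fin n → ℝ) : hyperVar R (zoom g lam x) ≤
      ∑ k ∈ Finset.range d, R ^ (2 * (k + 1)) *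
        ∑ α ∈ Finset.piAntidiag Finset.univ (k + 1), monicHermiteCoeff (zoom g lam x) α ^ 2 := by
  have hcoeff : ∀ α : Fin n → ℕ, d < ∑ i, α i → hermiteCoeff (zoom g lam x) α = 0 := fun α hα => by
    rw [hermiteCoeff_eq_div, monicHermiteCoeff_zoom_eq_zero hg lam x hα, zero_div]
  rw [hyperVar, hyperVarGE, tsum_eq_sum
    (s := (Finset.range d).biUnion fun k => Finset.piAntidiag Finset.univ (k + 1)),
    Finset.sum_biUnion]
  · refine Finset.sum_le_sum fun k _ => ?_
    rw [Finset.mul_sum]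
    refine Finset.sum_le_sum fun α hα => ?_
    have hα' : ∑ i, α i = k + 1 := by simpa using hα
    rw [if_pos (by omega), hα']
    exact mul_le_mul_of_nonneg_left (hermiteCoeff_sq_le _ _) (by rw [pow_mul]; positivity)
  · intro k _ l _ hkl
    refine Finset.disjoint_left.2 fun α h1 h2 => hkl ?_
    simp only [Finset.mem_piAntidiag, Finset.mem_univ, implies_true, and_true] at h1 h2
    omega
  · intro α hα
    rw [ite_eq_right_iff]
    intro h1
    rw [hcoeff α ?_]
    · simp
    · by_contra! h2
      refine hα (Finset.mem_biUnion.2 ⟨∑ i, α i - 1, Finset.mem_range.2 (by omega), ?_⟩)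
      exact Finset.mem_piAntidiag.2 ⟨(Nat.sub_add_cancel h1).symm, fun i _ => Finset.mem_univ i⟩

theorem monicHermiteCoeff_zero_sq_le_norm2sq {n : ℕ} (g : MvPolynomial (Fin n) ℝ) :
    monicHermiteCoeff g 0 ^ 2 ≤ norm2sq g := by
  have h1 := integrable_eval_stdGaussianPi g
  have h2 : Integrable (fun y => eval y g ^ 2) (stdGaussianPi (Fin n)) :=
    (integrable_eval_stdGaussianPi (g ^ 2)).congr
      (Filter.Eventually.of_forall fun y => map_pow (eval y) g 2)
  have h0 : monicHermiteCoeff g 0 = ∫ y, eval y g ∂stdGaussianPi (Fin n) := by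
    simp [monicHermiteCoeff]
  have hmem : MemLp (fun y => eval y g) 2 (stdGaussianPi (Fin n)) :=
    (memLp_two_iff_integrable_sq h1.aestronglyMeasurable).2 h2
  have hv := variance_nonneg (fun y => eval y g) (stdGaussianPi (Fin n))
  rw [variance_eq_sub hmem] at hv
  rw [h0]
  simpa [norm2sq, gaussianN] using hv

theorem exists_coeff_eq_eval {n I d : ℕ} {g : (Fin I → ℝ) → MvPolynomial (Fin n) ℝ}
    (hg : NiceFamily n I d g) : ∃ c : (Fin n →₀ ℕ) → MvPolynomial (Fin I) ℝ,
      ∀ m υ, coeff m (g υ) = eval υ (c m) := by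
  choose c _ hc using hg.2
  exact ⟨c, hc⟩

theorem integrable_monicHermiteCoeff_sq {n I d : ℕ} {g : (Fin I → ℝ) → MvPolynomial (Fin n) ℝ}
    (hg : NiceFamily n I d g) (lam : ℝ) (x : Fin n → ℝ) (α : Fin n → ℕ) :
    Integrable (fun υ => monicHermiteCoeff (zoom (g υ) lam x) α ^ 2) (stdGaussianPi (Fin I)) := by
  obtain ⟨c, hc⟩ := exists_coeff_eq_eval hg
  simp only [monicHermiteCoeff_zoom (hg.1 _), hc]
  have := integrable_eval_stdGaussianPi ((∑ m : exponentsLE n d,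
    c m * C (eval x (zoomMonomialMv (√(1 - lam)) (√lam) m α))) ^ 2)
  simpa only [map_pow, map_sum, map_mul, eval_C] using this

theorem integrable_norm2sq_zoom {n I d : ℕ} {g : (Fin I → ℝ) → MvPolynomial (Fin n) ℝ}
    (hg : NiceFamily n I d g) (lam : ℝ) (x : Fin n → ℝ) :
    Integrable (fun υ => norm2sq (zoom (g υ) lam x)) (stdGaussianPi (Fin I)) := by
  obtain ⟨c, hc⟩ := exists_coeff_eq_eval hg
  obtain ⟨r, v, hv⟩ := exists_integral_sq_eq_sum_sq fun m : exponentsLE n d =>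
    (∏ i, (C (√(1 - lam) * x i) + C (√lam) * X i) ^ (m : Fin n →₀ ℕ) i :
      MvPolynomial (Fin n) ℝ)
  have h : ∀ υ, norm2sq (zoom (g υ) lam x) = ∑ j, (∑ m, v j m * coeff m (g υ)) ^ 2 := fun υ => by
    rw [← hv]
    simp only [norm2sq, eval_zoom (hg.1 υ), gaussianN, map_prod, map_pow, map_add, map_mul, eval_C,
      eval_X, mul_comm (coeff _ _)]
  simp only [h, hc]
  have := integrable_eval_stdGaussianPi (∑ j, (∑ m : exponentsLE n d, C (v j m) * c m) ^ 2)
  simpa only [map_pow, map_sum, map_mul, eval_C] using this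

/-- The averages of the squared Hermite coefficients of the zooms of a nice distribution of
polynomials are sums of squares of polynomials that are linked by differentiation. -/
theorem exists_integral_monicHermiteCoeff_sq_eq {n I d : ℕ}
    {g : (Fin I → ℝ) → MvPolynomial (Fin n) ℝ} (hg : NiceFamily n I d g) (lam : ℝ) :
    ∃ (r : ℕ) (P : Fin r → (Fin n → ℕ) → MvPolynomial (Fin n) ℝ),
      (∀ j α, (P j α).totalDegree ≤ d) ∧
      (∀ j α i, C √(1 - lam) * P j (α + Pi.single i 1) = C √lam * pderiv i (P j α)) ∧
      ∀ x α, ∫ υ, monicHermiteCoeff (zoom (g υ) lam x) α ^ 2 ∂stdGaussianPi (Fin I) =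
        ∑ j, eval x (P j α) ^ 2 := by
  obtain ⟨c, hc⟩ := exists_coeff_eq_eval hg
  obtain ⟨r, v, hv⟩ := exists_integral_sq_eq_sum_sq fun m : exponentsLE n d => c m
  refine ⟨r, fun j α => ∑ m, C (v j m) * zoomMonomialMv (√(1 - lam)) (√lam) m α,
    fun j α => totalDegree_finsetSum_le fun m _ => (totalDegree_mul _ _).trans ?_,
    fun j α i => ?_, fun x α => ?_⟩
  · rw [totalDegree_C, zero_add]
    exact (totalDegree_zoomMonomialMv_le _ _ _ _).trans (mem_exponentsLE.1 m.2)
  · simp only [Finset.mul_sum, map_sum, pderiv_C_mul]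
    refine Finset.sum_congr rfl fun m _ => ?_
    rw [mul_left_comm, C_mul_zoomMonomialMv, mul_left_comm]
  · simp only [monicHermiteCoeff_zoom (hg.1 _), hc, hv, map_sum, map_mul, eval_C]

/-- If the levels of the averaged squared Hermite coefficients of the zoom grow slowly, then the
zoomed family is attenuated on average. -/
theorem integral_hyperVar_zoom_le {n I d : ℕ} {g : (Fin I → ℝ) → MvPolynomial (Fin n) ℝ}
    (hg : NiceFamily n I d g) {r : ℕ} {P : Fin r → (Fin n → ℕ) → MvPolynomial (Fin n) ℝ}
    {R ε c lam : ℝ} {x : Fin n → ℝ}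
    (hP : ∀ α, ∫ υ, monicHermiteCoeff (zoom (g υ) lam x) α ^ 2 ∂stdGaussianPi (Fin I) =
      ∑ j, eval x (P j α) ^ 2)
    (hε0 : 0 ≤ ε) (hε : ε ≤ 1) (hc : R ^ 2 * c ≤ ε / 2)
    (hstep : ∀ k < d, levelEnergy P (k + 1) x ≤ c * levelEnergy P k x) :
    ∫ υ, hyperVar R (zoom (g υ) lam x) ∂gaussianN I ≤
      ε * ∫ υ, norm2sq (zoom (g υ) lam x) ∂gaussianN I := by
  have hint := integrable_monicHermiteCoeff_sq hg lam x
  have hR : ∀ k, 0 ≤ R ^ (2 * k) := fun k => by rw [pow_mul]; positivity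
  have hnonneg : ∀ υ, 0 ≤ hyperVar R (zoom (g υ) lam x) := fun υ => tsum_nonneg fun α => by
    split_ifs
    · exact mul_nonneg (hR _) (sq_nonneg _)
    · exact le_rfl
  calc ∫ υ, hyperVar R (zoom (g υ) lam x) ∂gaussianN I
      ≤ ∫ υ, ∑ k ∈ Finset.range d, R ^ (2 * (k + 1)) *
          ∑ α ∈ Finset.piAntidiag Finset.univ (k + 1), monicHermiteCoeff (zoom (g υ) lam x) α ^ 2
            ∂stdGaussianPi (Fin I) :=
        integral_mono_of_nonneg (Filter.Eventually.of_forall hnonneg)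
          (integrable_finsetSum _ fun k _ =>
            (integrable_finsetSum _ fun α _ => hint α).const_mul _)
          (Filter.Eventually.of_forall fun υ => hyperVar_zoom_le (hg.1 υ) R lam x)
    _ = ∑ k ∈ Finset.range d, R ^ (2 * (k + 1)) * levelEnergy P (k + 1) x := by
        rw [integral_finsetSum _ fun k _ =>
          (integrable_finsetSum _ fun α _ => hint α).const_mul _]
        refine Finset.sum_congr rfl fun k _ => ?_
        rw [integral_const_mul, integral_finsetSum _ fun α _ => hint α]
        simp only [hP, levelEnergy]
    _ ≤ ε * levelEnergy P 0 x :=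
        sum_pow_mul_le_of_forall_succ_le (levelEnergy_nonneg P · x) hε0 hε hc hstep
    _ ≤ _ := by
        refine mul_le_mul_of_nonneg_left ?_ hε0
        have h0 : levelEnergy P 0 x =
            ∫ υ, monicHermiteCoeff (zoom (g υ) lam x) 0 ^ 2 ∂stdGaussianPi (Fin I) := by
          simp [levelEnergy, hP]
        rw [h0]
        exact integral_mono (hint 0) (integrable_norm2sq_zoom hg lam x)
          fun υ => monicHermiteCoeff_zero_sq_le_norm2sq _

theorem rpow_mul_log_mul_sq_le_one {d : ℕ} (hd : 2 ≤ d) {β t : ℝ} (hβ0 : 0 < β) (hβ : β < 1)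
    (ht : t = 3072 * d ^ 3 / β) :
    (β / d) ^ (60 * Real.log d) * (256 * t ^ 2) ≤ 1 := by
  have hd' : (2 : ℝ) ≤ d := by exact_mod_cast hd
  have hd0 : (0 : ℝ) < d := by linarith
  have hx0 : 0 < β / d := by positivity
  have hx : β / d ≤ 1 / 2 := by
    rw [div_le_div_iff₀ hd0 two_pos]
    linarith
  have hlog : (38 : ℝ) ≤ 60 * Real.log d := by
    have h1 := Real.log_le_log two_pos hd'
    have h2 := Real.log_two_gt_d9
    linarith
  have hpow : (β / d) ^ (60 * Real.log d) ≤ (β / d) ^ 38 := by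
    rw [← Real.rpow_natCast]
    exact Real.rpow_le_rpow_of_exponent_ge hx0 (by linarith) (by exact_mod_cast hlog)
  have htx : t * (β / d) ^ 3 = 3072 * β ^ 2 := by
    rw [ht]
    field_simp
  have h32 : (β / d) ^ 32 ≤ (1 / 2) ^ 32 := pow_le_pow_left₀ hx0.le hx 32
  have hβ4 : β ^ 4 ≤ 1 := pow_le_one₀ hβ0.le hβ.le
  calc (β / d) ^ (60 * Real.log d) * (256 * t ^ 2)
      ≤ (β / d) ^ 38 * (256 * t ^ 2) := by gcongr
    _ = 256 * (t * (β / d) ^ 3) ^ 2 * (β / d) ^ 32 := by ring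
    _ = 256 * 3072 ^ 2 * β ^ 4 * (β / d) ^ 32 := by rw [htx]; ring
    _ ≤ 256 * 3072 ^ 2 * 1 * (1 / 2) ^ 32 := by gcongr
    _ ≤ 1 := by norm_num

/-- Local hyperconcentration theorem for a nice distribution of polynomials: there is a
universal constant `C` such that for a nice distribution `(g_υ)` of degree-`d`
polynomials (`d ≥ 2`), `R ≥ 1`, `0 < ε ≤ 1`, `0 < β < 1`, and
`0 ≤ λ ≤ (ε/R²)·(β/d)^{C·log d}`, for `x ∼ N(0,1)^n`, except with probability at most
`β`, the family `((g_υ)_{λ|x})_υ` is `(R,ε)`-attenuated on average, i.e.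
`E_υ[HyperVar_R[(g_υ)_{λ|x}]] ≤ ε·E_υ[‖(g_υ)_{λ|x}‖₂²]`. -/
theorem local_hyperconcentration_nice :
    ∃ C : ℝ, ∀ (n I d : ℕ), 2 ≤ d →
      ∀ g : (Fin I → ℝ) → MvPolynomial (Fin n) ℝ, NiceFamily n I d g →
      ∀ R ε β lam : ℝ, 1 ≤ R → 0 < ε → ε ≤ 1 → 0 < β → β < 1 →
      0 ≤ lam → lam ≤ (ε / R ^ 2) * (β / d) ^ (C * Real.log d) →
      gaussianN n {x | ¬ ((∫ υ, hyperVar R (zoom (g υ) lam x) ∂(gaussianN I)) ≤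
          ε * ∫ υ, norm2sq (zoom (g υ) lam x) ∂(gaussianN I))} ≤ ENNReal.ofReal β := by
  refine ⟨60, fun n I d hd g hg R ε β lam hR hε0 hε hβ0 hβ hlam0 hlam => ?_⟩
  obtain ⟨r, P, hdeg, hP, hint⟩ := exists_integral_monicHermiteCoeff_sq_eq hg lam
  have hd' : (2 : ℝ) ≤ d := by exact_mod_cast hd
  set t : ℝ := 3072 * d ^ 3 / β with ht
  set κ : ℝ := (β / d) ^ (60 * Real.log d)
  have ht0 : 0 < t := by positivity
  have hdt : 3 * (d : ℝ) ≤ t := by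
    rw [ht, le_div_iff₀ hβ0]
    have h1 : (1 : ℝ) ≤ d ^ 2 := one_le_pow₀ (by linarith)
    have h2 : (d : ℝ) ≤ d ^ 3 := by nlinarith
    nlinarith
  have hκ : κ * (256 * t ^ 2) ≤ 1 := rpow_mul_log_mul_sq_le_one hd hβ0 hβ ht
  have hR2 : 1 ≤ R ^ 2 := one_le_pow₀ hR
  have hlamR : R ^ 2 * lam ≤ ε * κ := by
    have := mul_le_mul_of_nonneg_left hlam (show 0 ≤ R ^ 2 by positivity)
    rwa [← mul_assoc, mul_div_cancel₀ _ (by positivity)] at this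
  have hc : R ^ 2 * (128 * t ^ 2 * lam) ≤ ε / 2 := by
    have h1 := mul_le_mul_of_nonneg_left hκ hε0.le
    have h2 := mul_le_mul_of_nonneg_left hlamR (show 0 ≤ 128 * t ^ 2 by positivity)
    linarith
  have hlam2 : lam ≤ 1 / 2 := by
    have h1 : (1 : ℝ) ≤ t := by linarith
    have h2 : lam ≤ R ^ 2 * (128 * t ^ 2 * lam) := by
      have h3 : 1 ≤ R ^ 2 * (128 * t ^ 2) := by nlinarith
      nlinarith
    linarith
  have hbad := measure_levelEnergy_succ_gt_le (by omega) hdeg hP hdt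
  have hβt : 3072 * (d : ℝ) ^ 3 / t = β := by
    rw [ht]
    field_simp
  rw [hβt] at hbad
  refine (measure_mono fun x hx => ?_).trans hbad
  by_contra hx'
  simp only [Set.mem_ofPred_eq, not_exists, not_and, not_lt] at hx'
  refine hx (integral_hyperVar_zoom_le hg (hint x) hε0.le hε hc fun k hk => ?_)
  have h1 := hx' k hk
  rw [Real.sq_sqrt hlam0, Real.sq_sqrt (by linarith)] at h1
  have h2 := levelEnergy_nonneg P (k + 1) x
  nlinarith
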